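/- arXiv:1812.03031 — 5 statements merged into one kernel-verified Lean document; each statement's English description precedes it below -/
import Mathlib

section
/- For any joint distribution P_{XY} with |𝒳| = 2 and I(X;Y) = β ∈ (0,1], and any η ∈ (0,1), it holds that I(X;[Y]_{M̄}) ≥ η·β, where M̄ = ⌊ (52/(1-η)) · max{ log(1/β), 1 } ⌋. -/
open scoped BigOperators

/-- Mutual information (in bits) of a joint probability mass function `p` on `𝒳 × 𝒴`,
with the convention `0 · log 0 = 0`. -/
noncomputable def miBits {𝒳 𝒴 : Type*} (p : 𝒳 → 𝒴 → ℝ) : ℝ :=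
  ∑' x, ∑' y, p x y * Real.logb 2 (p x y / ((∑' y', p x y') * (∑' x', p x' y)))

/-- `p` is a joint probability mass function. -/
def IsJointPMF {𝒳 𝒴 : Type*} (p : 𝒳 → 𝒴 → ℝ) : Prop :=
  (∀ x y, 0 ≤ p x y) ∧ Summable (fun xy : 𝒳 × 𝒴 => p xy.1 xy.2) ∧ (∑' x, ∑' y, p x y) = 1

/-- Joint pmf of `(X, f(Y))` when `(X,Y) ~ p` and `f` is a deterministic `M`-level quantizer. -/
noncomputable def quantJoint {𝒳 𝒴 : Type*} (p : 𝒳 → 𝒴 → ℝ) {M : ℕ} (f : 𝒴 → Fin M) :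
    𝒳 → Fin M → ℝ :=
  fun x m => ∑' y, if f y = m then p x y else 0

/-- `I(X;[Y]_M)`: the best mutual information achievable by a deterministic `M`-level
quantizer of `Y`. -/
noncomputable def quantMI {𝒳 𝒴 : Type*} (p : 𝒳 → 𝒴 → ℝ) (M : ℕ) : ℝ :=
  ⨆ f : 𝒴 → Fin M, miBits (quantJoint p f)

/-- The information distillation function `ID_M(K, β)`. -/
noncomputable def ID (M K : ℕ) (β : ℝ) : ℝ :=
  sInf {v | ∃ p : Fin K → ℕ → ℝ, IsJointPMF p ∧ β ≤ miBits p ∧ v = quantMI p M}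

/-- Binary entropy function (bits). -/
noncomputable def hBin (t : ℝ) : ℝ :=
  -(t * Real.logb 2 t) - (1 - t) * Real.logb 2 (1 - t)

/-!
Mutual information is the average over the letters `y` of the divergence `D(P_{X|y} ‖ P_X)`.
Merge two letters when their posteriors lie on the same side of `P_X` and the values
`I + D(P_{X|y} ‖ P_X)`, with `I = I(X;Y)`, lie in the same interval `[I r ^ k, I r ^ (k + 1))`,
where `r = 2 / (1 + η)`. For binary `X` the divergence is monotone on each side of `P_X`, and the
posterior of a cell is an average of the posteriors of its letters, so some letter of the cell has
divergence at most that of the cell. Hence merging costs at most a factor `r` in `I + D`, and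
averaging gives `2 I ≤ r (I(X;f(Y)) + I)`, that is `I(X;f(Y)) ≥ η I`.

Divergences are at most `C = max_x log (1 / P_X(x))`, so `2 (⌊log (1 + C / I) / log r⌋ + 1)` cells
suffice. Since `I ≤ H(X) ≤ 3 √P_X(x)`, the bound `C` is of order `max (log (1 / I)) 1`, while
`log r ≥ (1 - η) / 2`.
-/

section Divergence

open Real

variable {𝒳 : Type*} [Fintype 𝒳] {a q : 𝒳 → ℝ}

/-- The divergence `D(a ‖ q)` in bits of two weight vectors on a finite alphabet. Letters with
`q x = 0` contribute `0`, not `∞`. -/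
noncomputable def klBits (a q : 𝒳 → ℝ) : ℝ := ∑ x, a x * logb 2 (a x / q x)

lemma convexOn_mul_logb_div {c : ℝ} (hc : c ≠ 0) :
    ConvexOn ℝ (Set.Ici 0) fun t : ℝ => t * logb 2 (t / c) := by
  have hlog : 0 ≤ (log 2)⁻¹ := inv_nonneg.2 (log_nonneg one_le_two)
  refine ((convexOn_mul_log.add ((LinearMap.mulRight ℝ (-log c)).convexOn
    (convex_Ici (0 : ℝ)))).smul hlog).congr fun t _ => ?_
  rcases eq_or_ne t 0 with rfl | ht
  · simp
  · simp only [Pi.add_apply, LinearMap.mulRight_apply, smul_eq_mul, logb, log_div ht hc]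
    ring

lemma convexOn_klBits (hq : ∀ x, q x ≠ 0) : ConvexOn ℝ (Set.Ici 0) fun a => klBits a q := by
  refine ⟨convex_Ici 0, fun a ha b hb s t hs ht hst => ?_⟩
  simp only [klBits, smul_eq_mul, Finset.mul_sum, ← Finset.sum_add_distrib]
  exact Finset.sum_le_sum fun x _ =>
    (convexOn_mul_logb_div (hq x)).2 (ha x) (hb x) hs ht hst

lemma klBits_self (q : 𝒳 → ℝ) : klBits q q = 0 :=
  Finset.sum_eq_zero fun x _ => by
    rcases eq_or_ne (q x) 0 with hx | hx <;> simp [hx]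

lemma sub_div_log_two_le_mul_logb_div {a c : ℝ} (hc : 0 < c) (ha : 0 ≤ a) :
    (a - c) / log 2 ≤ a * logb 2 (a / c) := by
  have hkl : 0 ≤ c * InformationTheory.klFun (a / c) :=
    mul_nonneg hc.le (InformationTheory.klFun_nonneg (by positivity))
  have hc_mul : c * InformationTheory.klFun (a / c) = a * log (a / c) + c - a := by
    rw [InformationTheory.klFun_apply]
    field_simp
  rw [logb, ← mul_div_assoc]
  exact div_le_div_of_nonneg_right (by linarith) (log_nonneg one_le_two)

lemma klBits_nonneg (hq : ∀ x, 0 < q x) (ha : ∀ x, 0 ≤ a x) (h : ∑ x, q x ≤ ∑ x, a x) :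
    0 ≤ klBits a q :=
  calc 0 ≤ (∑ x, a x - ∑ x, q x) / log 2 :=
        div_nonneg (sub_nonneg.2 h) (log_nonneg one_le_two)
    _ = ∑ x, (a x - q x) / log 2 := by rw [← Finset.sum_sub_distrib, Finset.sum_div]
    _ ≤ klBits a q :=
        Finset.sum_le_sum fun x _ => sub_div_log_two_le_mul_logb_div (hq x) (ha x)

lemma klBits_le_of_mem_segment {b : 𝒳 → ℝ} (hq : ∀ x, 0 < q x) (ha : ∀ x, 0 ≤ a x)
    (h : ∑ x, q x ≤ ∑ x, a x) (hb : b ∈ segment ℝ q a) : klBits b q ≤ klBits a q :=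
  calc klBits b q ≤ max (klBits q q) (klBits a q) :=
        (convexOn_klBits fun x => (hq x).ne').le_on_segment (fun x => (hq x).le) ha hb
    _ = klBits a q := by rw [klBits_self, max_eq_right (klBits_nonneg hq ha h)]

lemma mul_logb_div_le {a : ℝ} (ha0 : 0 ≤ a) (ha1 : a ≤ 1) (c : ℝ) :
    a * logb 2 (a / c) ≤ a * -logb 2 c := by
  rcases eq_or_ne c 0 with rfl | hc
  · simp
  rcases ha0.eq_or_lt with rfl | ha
  · simp
  · rw [logb_div ha.ne' hc]
    exact mul_le_mul_of_nonneg_left (by linarith [logb_nonpos one_lt_two ha0 ha1]) ha0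

lemma abs_mul_logb_div_le {a : ℝ} (ha0 : 0 ≤ a) (ha1 : a ≤ 1) (c : ℝ) :
    |a * logb 2 (a / c)| ≤ (1 + |log c|) / log 2 := by
  have hlog : 0 < log 2 := log_pos one_lt_two
  rcases eq_or_ne c 0 with rfl | hc
  · simpa using hlog.le
  rcases ha0.eq_or_lt with rfl | ha
  · rw [zero_mul, abs_zero]
    positivity
  have hnegMulLog : |negMulLog a| ≤ 1 := by
    rw [abs_of_nonneg (negMulLog_nonneg ha0 ha1)]
    linarith [negMulLog_le_one_sub_self ha0]
  have hmul : |a * log c| ≤ |log c| := by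
    rw [abs_mul, abs_of_pos ha]
    exact mul_le_of_le_one_left (abs_nonneg _) ha1
  have hsplit : a * logb 2 (a / c) = (-negMulLog a - a * log c) / log 2 := by
    rw [logb, log_div ha.ne' hc, negMulLog]
    ring
  rw [hsplit, abs_div, abs_of_pos hlog]
  refine div_le_div_of_nonneg_right ((abs_sub _ _).trans ?_) hlog.le
  rw [abs_neg]
  exact add_le_add hnegMulLog hmul

lemma klBits_le_sum_mul_neg_logb (ha0 : ∀ x, 0 ≤ a x) (ha1 : ∀ x, a x ≤ 1) (q : 𝒳 → ℝ) :
    klBits a q ≤ ∑ x, a x * -logb 2 (q x) :=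
  Finset.sum_le_sum fun x _ => mul_logb_div_le (ha0 x) (ha1 x) (q x)

lemma mem_segment_of_coord_mem_Icc {a b q : Fin 2 → ℝ} (hab : ∑ x, a x = ∑ x, b x)
    (hqb : ∑ x, q x = ∑ x, b x) {x : Fin 2} (hb : b x ∈ Set.Icc (q x) (a x)) :
    b ∈ segment ℝ q a := by
  obtain ⟨s, t, hs, ht, hst, hbx⟩ := Icc_subset_segment hb
  have htotal : (s * q 0 + t * a 0) + (s * q 1 + t * a 1) = b 0 + b 1 := by
    rw [Fin.sum_univ_two, Fin.sum_univ_two] at hab hqb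
    linear_combination t * hab + s * hqb + (b 0 + b 1) * hst
  refine ⟨s, t, hs, ht, hst, funext fun i => ?_⟩
  simp only [Pi.add_apply, Pi.smul_apply, smul_eq_mul] at hbx ⊢
  fin_cases x <;> fin_cases i <;> simp only [Fin.zero_eta, Fin.mk_one] at hbx ⊢ <;> linarith

end Divergence

section BinaryEntropy

open Real

lemma binEntropy_le_two_mul_sqrt {t : ℝ} (ht0 : 0 ≤ t) (ht1 : t ≤ 1) :
    binEntropy t ≤ 2 * √t := by
  have hleft : negMulLog t ≤ 2 * √t - 2 * t := by
    have hsqrt := mul_le_mul_of_nonneg_left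
      (negMulLog_le_one_sub_self (sqrt_nonneg t)) (sqrt_nonneg t)
    have hsq := mul_self_sqrt ht0
    have hlog : negMulLog t = 2 * (√t * negMulLog √t) := by
      rw [negMulLog, negMulLog, log_sqrt ht0]
      linear_combination log t * hsq
    linarith
  have hright : negMulLog (1 - t) ≤ t := by
    linarith [negMulLog_le_one_sub_self (sub_nonneg.2 ht1)]
  rw [binEntropy_eq_negMulLog_add_negMulLog_one_sub]
  linarith

lemma sum_negMulLog_div_log_two_le {q : Fin 2 → ℝ} (hq0 : ∀ x, 0 ≤ q x) (hq1 : ∑ x, q x = 1)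
    (x : Fin 2) : (∑ i, negMulLog (q i)) / log 2 ≤ 3 * √(q x) := by
  have hsum : ∑ i, negMulLog (q i) = binEntropy (q x) := by
    rw [Fin.sum_univ_two] at hq1 ⊢
    rw [binEntropy_eq_negMulLog_add_negMulLog_one_sub]
    fin_cases x <;> simp only [Fin.zero_eta, Fin.mk_one]
    · rw [← hq1, add_sub_cancel_left]
    · rw [← hq1, add_sub_cancel_right, add_comm]
  have hqx : q x ≤ 1 := hq1 ▸ Finset.single_le_sum (fun i _ => hq0 i) (Finset.mem_univ x)
  rw [hsum, div_le_iff₀ (log_pos one_lt_two)]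
  nlinarith [binEntropy_le_two_mul_sqrt (hq0 x) hqx, sqrt_nonneg (q x), log_two_gt_d9]

lemma neg_logb_le_six_mul_max {q β : ℝ} (hβ : 0 < β) (h : β ≤ 3 * √q) :
    -logb 2 q ≤ 6 * max (logb 2 (1 / β)) 1 := by
  have hq : 0 < q := sqrt_pos.1 (by linarith)
  have hinv : q⁻¹ ≤ 2 ^ 4 * (1 / β) ^ 2 := by
    rw [inv_eq_one_div, one_div_pow, mul_one_div, div_le_div_iff₀ hq (by positivity)]
    nlinarith [mul_self_sqrt hq.le]
  have hlog := logb_le_logb_of_le one_lt_two (inv_pos.2 hq) hinv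
  rw [logb_inv, logb_mul (by positivity) (by positivity), logb_pow, logb_pow,
    logb_self_eq_one one_lt_two] at hlog
  push_cast at hlog
  linarith [le_max_left (logb 2 (1 / β)) 1, le_max_right (logb 2 (1 / β)) 1]

end BinaryEntropy

section Marginals

variable {𝒳 𝒴 : Type*} {p : 𝒳 → 𝒴 → ℝ}

/-- The law `P_X` of the first coordinate. -/
noncomputable def marginalX (p : 𝒳 → 𝒴 → ℝ) (x : 𝒳) : ℝ := ∑' y, p x y

/-- The law `P_Y` of the second coordinate. -/
noncomputable def marginalY (p : 𝒳 → 𝒴 → ℝ) (y : 𝒴) : ℝ := ∑' x, p x y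

/-- The conditional law `P_{X|Y=y}`; it is the zero vector when `P_Y(y) = 0`. -/
noncomputable def posterior (p : 𝒳 → 𝒴 → ℝ) (y : 𝒴) (x : 𝒳) : ℝ := p x y / marginalY p y

namespace IsJointPMF

lemma nonneg (hp : IsJointPMF p) (x : 𝒳) (y : 𝒴) : 0 ≤ p x y := hp.1 x y

lemma summable (hp : IsJointPMF p) (x : 𝒳) : Summable (p x) := hp.2.1.prod_factor x

lemma marginalX_nonneg (hp : IsJointPMF p) (x : 𝒳) : 0 ≤ marginalX p x := tsum_nonneg (hp.nonneg x)

lemma marginalY_nonneg (hp : IsJointPMF p) (y : 𝒴) : 0 ≤ marginalY p y :=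
  tsum_nonneg fun x => hp.nonneg x y

lemma posterior_nonneg (hp : IsJointPMF p) (y : 𝒴) (x : 𝒳) : 0 ≤ posterior p y x :=
  div_nonneg (hp.nonneg x y) (hp.marginalY_nonneg y)

lemma hasSum_marginalY (hp : IsJointPMF p) : HasSum (marginalY p) 1 := by
  have hswap : ∑' y, marginalY p y = 1 := (Summable.tsum_comm hp.2.1).trans hp.2.2
  exact hswap ▸ hp.2.1.prod_symm.prod.hasSum

lemma le_marginalY (hp : IsJointPMF p) (x : 𝒳) (y : 𝒴) : p x y ≤ marginalY p y :=
  (hp.2.1.prod_symm.prod_factor y).le_tsum x fun i _ => hp.nonneg i y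

lemma posterior_le_one (hp : IsJointPMF p) (y : 𝒴) (x : 𝒳) : posterior p y x ≤ 1 :=
  div_le_one_of_le₀ (hp.le_marginalY x y) (hp.marginalY_nonneg y)

lemma marginalY_mul_posterior (hp : IsJointPMF p) (x : 𝒳) (y : 𝒴) :
    marginalY p y * posterior p y x = p x y :=
  mul_div_cancel_of_imp' fun h => le_antisymm (h ▸ hp.le_marginalY x y) (hp.nonneg x y)

lemma sum_marginalX [Fintype 𝒳] (hp : IsJointPMF p) : ∑ x, marginalX p x = 1 := by
  rw [← tsum_fintype (L := .unconditional _)]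
  exact hp.2.2

end IsJointPMF

lemma sum_posterior [Fintype 𝒳] {y : 𝒴} (hy : marginalY p y ≠ 0) : ∑ x, posterior p y x = 1 := by
  simp only [posterior, ← Finset.sum_div]
  rw [← tsum_fintype (L := .unconditional _)]
  exact div_self hy

lemma posterior_eq_zero {y : 𝒴} (hy : marginalY p y = 0) : posterior p y = 0 :=
  funext fun x => by rw [posterior, hy, div_zero, Pi.zero_apply]

lemma klBits_posterior_eq_zero [Fintype 𝒳] {y : 𝒴} (hy : marginalY p y = 0) (q : 𝒳 → ℝ) :
    klBits (posterior p y) q = 0 := by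
  simp [klBits, posterior_eq_zero hy]

end Marginals

section MutualInformation

open Real

variable {𝒳 𝒴 : Type*} {p : 𝒳 → 𝒴 → ℝ}

namespace IsJointPMF

lemma summable_marginalY_mul_posterior_mul_logb (hp : IsJointPMF p) (x : 𝒳) (c : ℝ) :
    Summable fun y => marginalY p y * (posterior p y x * logb 2 (posterior p y x / c)) := by
  refine .of_norm_bounded (hp.hasSum_marginalY.summable.mul_right ((1 + |log c|) / log 2))
    fun y => ?_
  rw [norm_mul, norm_of_nonneg (hp.marginalY_nonneg y), norm_eq_abs]
  exact mul_le_mul_of_nonneg_left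
    (abs_mul_logb_div_le (hp.posterior_nonneg y x) (hp.posterior_le_one y x) c)
    (hp.marginalY_nonneg y)

lemma mul_logb_div_marginals (hp : IsJointPMF p) (x : 𝒳) (y : 𝒴) :
    p x y * logb 2 (p x y / (marginalX p x * marginalY p y)) =
      marginalY p y * (posterior p y x * logb 2 (posterior p y x / marginalX p x)) := by
  rw [← mul_assoc, hp.marginalY_mul_posterior, posterior, div_div, mul_comm (marginalX p x)]

variable [Fintype 𝒳]

lemma hasSum_miBits (hp : IsJointPMF p) :
    HasSum (fun y => marginalY p y * klBits (posterior p y) (marginalX p)) (miBits p) := by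
  have h := hasSum_sum fun x (_ : x ∈ Finset.univ) =>
    (hp.summable_marginalY_mul_posterior_mul_logb x (marginalX p x)).hasSum
  have hmi : miBits p = ∑ x, ∑' y,
      marginalY p y * (posterior p y x * logb 2 (posterior p y x / marginalX p x)) := by
    simp only [← hp.mul_logb_div_marginals]
    exact tsum_fintype _
  rw [hmi]
  exact h.congr_fun fun y => (Finset.mul_sum _ _ _)

lemma miBits_le_entropy (hp : IsJointPMF p) :
    miBits p ≤ (∑ x, negMulLog (marginalX p x)) / log 2 := by
  have hsum : HasSum (fun y => ∑ x, p x y * -logb 2 (marginalX p x))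
      (∑ x, marginalX p x * -logb 2 (marginalX p x)) :=
    hasSum_sum fun x _ => (hp.summable x).hasSum.mul_right _
  calc miBits p ≤ ∑ x, marginalX p x * -logb 2 (marginalX p x) := by
        refine hasSum_le (fun y => ?_) hp.hasSum_miBits hsum
        simp only [← hp.marginalY_mul_posterior _ y, mul_assoc, ← Finset.mul_sum]
        exact mul_le_mul_of_nonneg_left
          (klBits_le_sum_mul_neg_logb (hp.posterior_nonneg y) (hp.posterior_le_one y) _)
          (hp.marginalY_nonneg y)
    _ = (∑ x, negMulLog (marginalX p x)) / log 2 := by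
        rw [Finset.sum_div]
        exact Finset.sum_congr rfl fun x _ => by rw [negMulLog, logb]; ring

lemma klBits_posterior_nonneg (hp : IsJointPMF p) (hq : ∀ x, 0 < marginalX p x) (y : 𝒴) :
    0 ≤ klBits (posterior p y) (marginalX p) := by
  by_cases hy : marginalY p y = 0
  · rw [klBits_posterior_eq_zero hy]
  · exact klBits_nonneg hq (hp.posterior_nonneg y) (by rw [hp.sum_marginalX, sum_posterior hy])

lemma klBits_posterior_le (hp : IsJointPMF p) {C : ℝ} (hC0 : 0 ≤ C)
    (hC : ∀ x, -logb 2 (marginalX p x) ≤ C) (y : 𝒴) :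
    klBits (posterior p y) (marginalX p) ≤ C := by
  by_cases hy : marginalY p y = 0
  · rwa [klBits_posterior_eq_zero hy]
  calc klBits (posterior p y) (marginalX p)
      ≤ ∑ x, posterior p y x * -logb 2 (marginalX p x) :=
        klBits_le_sum_mul_neg_logb (hp.posterior_nonneg y) (hp.posterior_le_one y) _
    _ ≤ ∑ x, posterior p y x * C :=
        Finset.sum_le_sum fun x _ => mul_le_mul_of_nonneg_left (hC x) (hp.posterior_nonneg y x)
    _ = C := by rw [← Finset.sum_mul, sum_posterior hy, one_mul]

end IsJointPMF

end MutualInformation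

section Quantization

open Real

lemma summable_ite_eq {ι κ : Type*} [DecidableEq κ] {w : ι → ℝ} (hw : Summable w)
    (f : ι → κ) (k : κ) : Summable fun i => if f i = k then w i else 0 :=
  (hw.indicator {i | f i = k}).congr fun i => by
    simp only [Set.indicator_apply, Set.mem_ofPred_eq]

lemma hasSum_mul_comp {ι κ : Type*} [Fintype κ] [DecidableEq κ] {w : ι → ℝ} (hw : Summable w)
    (f : ι → κ) (g : κ → ℝ) :
    HasSum (fun i => w i * g (f i)) (∑ k, (∑' i, if f i = k then w i else 0) * g k) := by
  have h := hasSum_sum fun k (_ : k ∈ Finset.univ) =>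
    (summable_ite_eq hw f k).hasSum.mul_right (g k)
  simpa only [ite_mul, zero_mul, Finset.sum_ite_eq, Finset.mem_univ, if_true] using h

variable {𝒳 𝒴 : Type*} {p : 𝒳 → 𝒴 → ℝ} {M : ℕ}

lemma marginalX_quantJoint {x : 𝒳} (hx : Summable (p x)) (f : 𝒴 → Fin M) :
    marginalX (quantJoint p f) x = marginalX p x := by
  have h := (hasSum_mul_comp hx f fun _ => 1).tsum_eq
  simp only [mul_one] at h
  rw [marginalX, tsum_fintype]
  exact h.symm

namespace IsJointPMF

lemma isJointPMF_quantJoint (hp : IsJointPMF p) (f : 𝒴 → Fin M) : IsJointPMF (quantJoint p f) := by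
  have hX : marginalX (quantJoint p f) = marginalX p :=
    funext fun x => marginalX_quantJoint (hp.summable x) f
  have h0 (x : 𝒳) (m : Fin M) : 0 ≤ quantJoint p f x m := tsum_nonneg fun y => by
    split_ifs
    exacts [hp.nonneg x y, le_rfl]
  refine ⟨h0, (summable_prod_of_nonneg fun xm => h0 xm.1 xm.2).2 ⟨fun _ => .of_finite, ?_⟩, ?_⟩
  · change Summable (marginalX (quantJoint p f))
    exact hX ▸ hp.2.1.prod
  · change ∑' x, marginalX (quantJoint p f) x = 1
    exact hX ▸ hp.2.2

lemma marginalY_quantJoint (hp : IsJointPMF p) (f : 𝒴 → Fin M) (m : Fin M) :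
    marginalY (quantJoint p f) m = ∑' y, if f y = m then marginalY p y else 0 := by
  have hswap : ∑' y, ∑' x, (if f y = m then p x y else 0) = marginalY (quantJoint p f) m :=
    Summable.tsum_comm (f := fun x y => if f y = m then p x y else 0)
      (summable_ite_eq hp.2.1 (fun xy => f xy.2) m)
  refine hswap.symm.trans (tsum_congr fun y => ?_)
  split_ifs
  · rfl
  · exact tsum_zero

lemma marginalY_quantJoint_ne_zero (hp : IsJointPMF p) (f : 𝒴 → Fin M) {y : 𝒴}
    (hy : marginalY p y ≠ 0) : marginalY (quantJoint p f) (f y) ≠ 0 := by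
  rw [hp.marginalY_quantJoint]
  refine ((summable_ite_eq hp.hasSum_marginalY.summable f (f y)).tsum_pos
    (fun z => ?_) y ?_).ne'
  · split_ifs
    exacts [hp.marginalY_nonneg z, le_rfl]
  · simpa only [if_true] using (hp.marginalY_nonneg y).lt_of_ne' hy

lemma miBits_quantJoint_le_quantMI [Finite 𝒳] (hp : IsJointPMF p) (f : 𝒴 → Fin M) :
    miBits (quantJoint p f) ≤ quantMI p M := by
  cases nonempty_fintype 𝒳
  refine le_ciSup (f := fun f : 𝒴 → Fin M => miBits (quantJoint p f)) ?_ f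
  refine ⟨(∑ x, negMulLog (marginalX p x)) / log 2, ?_⟩
  rintro _ ⟨f, rfl⟩
  simpa only [marginalX_quantJoint (hp.summable _)] using
    (hp.isJointPMF_quantJoint f).miBits_le_entropy

lemma miBits_add_le_mul_miBits_quantJoint_add [Fintype 𝒳] (hp : IsJointPMF p) (f : 𝒴 → Fin M)
    {β r : ℝ}
    (h : ∀ y, marginalY p y ≠ 0 → klBits (posterior p y) (marginalX p) + β ≤
      r * (klBits (posterior (quantJoint p f) (f y)) (marginalX p) + β)) :
    miBits p + β ≤ r * (miBits (quantJoint p f) + β) := by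
  have hX : marginalX (quantJoint p f) = marginalX p :=
    funext fun x => marginalX_quantJoint (hp.summable x) f
  have hquant : HasSum (fun y => marginalY p y *
      klBits (posterior (quantJoint p f) (f y)) (marginalX p))
      (miBits (quantJoint p f)) := by
    have hsum := (hp.isJointPMF_quantJoint f).hasSum_miBits
    rw [hX] at hsum
    rw [← hsum.tsum_eq, tsum_fintype]
    simp only [hp.marginalY_quantJoint]
    exact hasSum_mul_comp hp.hasSum_marginalY.summable f
      fun m => klBits (posterior (quantJoint p f) m) (marginalX p)
  have hβ := hp.hasSum_marginalY.mul_right β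
  rw [one_mul] at hβ
  refine hasSum_le (fun y => ?_) (hp.hasSum_miBits.add hβ) ((hquant.add hβ).mul_left r)
  rw [← mul_add, ← mul_add, mul_left_comm]
  by_cases hy : marginalY p y = 0
  · rw [hy, zero_mul, zero_mul]
  · exact mul_le_mul_of_nonneg_left (h y hy) (hp.marginalY_nonneg y)

lemma exists_posterior_le_posterior_quantJoint (hp : IsJointPMF p) (f : 𝒴 → Fin M) {m : Fin M}
    (hm : marginalY (quantJoint p f) m ≠ 0) (x : 𝒳) :
    ∃ y, f y = m ∧ marginalY p y ≠ 0 ∧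
      posterior p y x ≤ posterior (quantJoint p f) m x := by
  set c := posterior (quantJoint p f) m x
  by_contra! h
  obtain ⟨z, hz⟩ : ∃ z, (if f z = m then marginalY p z else 0) ≠ 0 := by
    contrapose! hm
    simp only [hp.marginalY_quantJoint, hm, tsum_zero]
  obtain ⟨hzm, hz0⟩ := ite_ne_right_iff.1 hz
  have hlt (y : 𝒴) (hym : f y = m) (hy : marginalY p y ≠ 0) : c * marginalY p y < p x y := by
    rw [← hp.marginalY_mul_posterior, mul_comm]
    exact mul_lt_mul_of_pos_left (h y hym hy) ((hp.marginalY_nonneg y).lt_of_ne' hy)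
  have hmean : c * marginalY (quantJoint p f) m = quantJoint p f x m := by
    rw [mul_comm, (hp.isJointPMF_quantJoint f).marginalY_mul_posterior]
  refine hmean.not_lt ?_
  rw [hp.marginalY_quantJoint, ← tsum_mul_left]
  refine Summable.tsum_lt_tsum (i := z) (fun y => ?_) ?_ ?_ (summable_ite_eq (hp.summable x) f m)
  · split_ifs with hym
    · by_cases hy : marginalY p y = 0
      · rw [hy, mul_zero]
        exact hp.nonneg x y
      · exact (hlt y hym hy).le
    · rw [mul_zero]
  · simpa only [hzm, if_true] using hlt z hzm hz0
  · exact (summable_ite_eq hp.hasSum_marginalY.summable f m).mul_left c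

end IsJointPMF

end Quantization

section BinaryQuantization

open Real

variable {𝒴 : Type*}

lemma IsJointPMF.exists_klBits_posterior_le {p : Fin 2 → 𝒴 → ℝ} (hp : IsJointPMF p)
    (hq : ∀ x, 0 < marginalX p x) {M : ℕ} (f : 𝒴 → Fin M) {m : Fin M}
    (hm : marginalY (quantJoint p f) m ≠ 0)
    (hside : ∀ y y', f y = m → f y' = m →
      (marginalX p 0 ≤ posterior p y 0 ↔ marginalX p 0 ≤ posterior p y' 0)) :
    ∃ y, f y = m ∧ klBits (posterior p y) (marginalX p) ≤
      klBits (posterior (quantJoint p f) m) (marginalX p) := by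
  have hmono {x : Fin 2} {y : 𝒴} (hy : marginalY p y ≠ 0)
      (hqy : marginalX p x ≤ posterior p y x)
      (hym : posterior p y x ≤ posterior (quantJoint p f) m x) :
      klBits (posterior p y) (marginalX p) ≤
        klBits (posterior (quantJoint p f) m) (marginalX p) :=
    klBits_le_of_mem_segment hq ((hp.isJointPMF_quantJoint f).posterior_nonneg m)
      (by rw [hp.sum_marginalX, sum_posterior hm])
      (mem_segment_of_coord_mem_Icc (by rw [sum_posterior hm, sum_posterior hy])
        (by rw [hp.sum_marginalX, sum_posterior hy]) ⟨hqy, hym⟩)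
  obtain ⟨y₀, hy₀m, hy₀, hle₀⟩ := hp.exists_posterior_le_posterior_quantJoint f hm 0
  obtain ⟨y₁, hy₁m, hy₁, hle₁⟩ := hp.exists_posterior_le_posterior_quantJoint f hm 1
  by_cases h : marginalX p 0 ≤ posterior p y₀ 0
  · exact ⟨y₀, hy₀m, hmono hy₀ h hle₀⟩
  · rw [hside y₀ y₁ hy₀m hy₁m, not_le] at h
    refine ⟨y₁, hy₁m, hmono hy₁ ?_ hle₁⟩
    have hsum := hp.sum_marginalX.trans (sum_posterior hy₁).symm
    rw [Fin.sum_univ_two, Fin.sum_univ_two] at hsum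
    linarith

lemma exists_fin_quantizer (side : 𝒴 → Prop) {level : 𝒴 → ℝ} {R : ℝ} (h0 : ∀ y, 0 ≤ level y)
    (hR : ∀ y, level y ≤ R) {M : ℕ} (hM : 2 * (⌊R⌋₊ + 1) ≤ M) :
    ∃ f : 𝒴 → Fin M, ∀ y y', f y = f y' → (side y ↔ side y') ∧ level y ≤ level y' + 1 := by
  obtain ⟨e⟩ : Nonempty (Prop × Fin (⌊R⌋₊ + 1) ↪ Fin M) :=
    Function.Embedding.nonempty_of_card_le (by
      rwa [Fintype.card_prod, Fintype.card_prop, Fintype.card_fin, Fintype.card_fin])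
  refine ⟨fun y => e (side y, ⟨⌊level y⌋₊, Nat.lt_succ_of_le (Nat.floor_mono (hR y))⟩),
    fun y y' h => ?_⟩
  obtain ⟨hside, hlevel⟩ := Prod.mk.inj (e.injective h)
  have hfloor : ⌊level y⌋₊ = ⌊level y'⌋₊ := Fin.mk.inj hlevel
  refine ⟨hside.to_iff, ?_⟩
  have hlt := Nat.lt_floor_add_one (level y)
  rw [hfloor] at hlt
  linarith [Nat.floor_le (h0 y')]

lemma add_le_mul_add_of_logb_le {r β s t : ℝ} (hr : 1 < r) (hβ : 0 < β) (hs : 0 ≤ s) (ht : 0 ≤ t)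
    (h : logb r (1 + s / β) ≤ logb r (1 + t / β) + 1) : s + β ≤ r * (t + β) := by
  have hs' : 0 < 1 + s / β := by positivity
  have ht' : 0 < 1 + t / β := by positivity
  have hr0 : 0 < r := one_pos.trans hr
  have hstep : logb r ((1 + t / β) * r) = logb r (1 + t / β) + 1 := by
    rw [logb_mul ht'.ne' hr0.ne', logb_self_eq_one hr]
  rw [← hstep, logb_le_logb hr hs' (mul_pos ht' hr0)] at h
  calc s + β = (1 + s / β) * β := by field_simp; ring
    _ ≤ (1 + t / β) * r * β := mul_le_mul_of_nonneg_right h hβ.le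
    _ = r * (t + β) := by field_simp; ring

lemma IsJointPMF.exists_miBits_add_le_mul {p : Fin 2 → 𝒴 → ℝ} (hp : IsJointPMF p)
    (hq : ∀ x, 0 < marginalX p x) {C β r : ℝ} (hC0 : 0 ≤ C)
    (hC : ∀ x, -logb 2 (marginalX p x) ≤ C) (hβ : 0 < β) (hr : 1 < r) {M : ℕ}
    (hM : 2 * (⌊logb r (1 + C / β)⌋₊ + 1) ≤ M) :
    ∃ f : 𝒴 → Fin M, miBits p + β ≤ r * (miBits (quantJoint p f) + β) := by
  set D : 𝒴 → ℝ := fun y => klBits (posterior p y) (marginalX p)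
  have hD0 : ∀ y, 0 ≤ D y := hp.klBits_posterior_nonneg hq
  have hDC : ∀ y, D y ≤ C := hp.klBits_posterior_le hC0 hC
  have hlevel0 (y : 𝒴) : 0 ≤ logb r (1 + D y / β) :=
    logb_nonneg hr (le_add_of_nonneg_right (div_nonneg (hD0 y) hβ.le))
  have hlevelC (y : 𝒴) : logb r (1 + D y / β) ≤ logb r (1 + C / β) :=
    logb_le_logb_of_le hr (by have := hD0 y; positivity) (by gcongr; exact hDC y)
  obtain ⟨f, hf⟩ := exists_fin_quantizer (fun y => marginalX p 0 ≤ posterior p y 0)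
    hlevel0 hlevelC hM
  refine ⟨f, hp.miBits_add_le_mul_miBits_quantJoint_add f fun y hy => ?_⟩
  have hm : marginalY (quantJoint p f) (f y) ≠ 0 := hp.marginalY_quantJoint_ne_zero f hy
  obtain ⟨z, hzy, hz⟩ := hp.exists_klBits_posterior_le hq f hm
    fun y₁ y₂ h₁ h₂ => (hf y₁ y₂ (h₁.trans h₂.symm)).1
  calc D y + β ≤ r * (D z + β) :=
        add_le_mul_add_of_logb_le hr hβ (hD0 y) (hD0 z) (hf y z hzy.symm).2
    _ ≤ _ := by gcongr

lemma one_add_six_mul_div_le_exp {β L : ℝ} (hβ : 0 < β) (hL0 : 0 ≤ L)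
    (hL : logb 2 (1 / β) ≤ L) : 1 + 6 * L / β ≤ exp (7 * L) := by
  have hinv : 1 / β ≤ exp L := by
    rw [← log_le_iff_le_exp (by positivity)]
    calc log (1 / β) = logb 2 (1 / β) * log 2 := (div_mul_cancel₀ _ (log_pos one_lt_two).ne').symm
      _ ≤ L * log 2 := mul_le_mul_of_nonneg_right hL (log_nonneg one_le_two)
      _ ≤ L := mul_le_of_le_one_right hL0 (by linarith [log_two_lt_d9])
  calc 1 + 6 * L / β = 1 + 6 * L * (1 / β) := by ring
    _ ≤ exp L + 6 * L * exp L := by gcongr; exact one_le_exp hL0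
    _ = (6 * L + 1) * exp L := by ring
    _ ≤ exp (6 * L) * exp L := by gcongr; exact add_one_le_exp _
    _ = exp (7 * L) := by rw [← exp_add]; ring_nf

lemma logb_one_add_six_mul_div_le {β η L : ℝ} (hβ : 0 < β) (hη0 : -1 < η) (hη1 : η < 1)
    (hL0 : 0 ≤ L) (hL : logb 2 (1 / β) ≤ L) :
    logb (2 / (1 + η)) (1 + 6 * L / β) ≤ 14 * (L / (1 - η)) := by
  have hη : 0 < 1 + η := by linarith
  have hlog : log (1 + 6 * L / β) ≤ 7 * L :=
    (log_le_iff_le_exp (by positivity)).2 (one_add_six_mul_div_le_exp hβ hL0 hL)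
  have hlogr : (1 - η) / 2 ≤ log (2 / (1 + η)) := by
    have h := one_sub_inv_le_log_of_pos (div_pos two_pos hη)
    rw [inv_div] at h
    linarith
  calc logb (2 / (1 + η)) (1 + 6 * L / β) ≤ 7 * L / ((1 - η) / 2) := by
        rw [logb]
        gcongr
    _ = 14 * (L / (1 - η)) := by
        have : 1 - η ≠ 0 := by linarith
        field_simp
        ring

lemma two_mul_floor_add_one_le {R s : ℝ} (hs : 1 ≤ s) (hR : R ≤ 14 * s) {M : ℕ}
    (hM : ⌊30 * s⌋₊ ≤ M) : 2 * (⌊R⌋₊ + 1) ≤ M := by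
  refine le_trans (Nat.le_floor ?_) hM
  have hfloor : (⌊R⌋₊ : ℝ) ≤ 14 * s :=
    (Nat.cast_le.2 (Nat.floor_mono hR)).trans (Nat.floor_le (by positivity))
  push_cast
  linarith

end BinaryQuantization

theorem binary_lower_bound_general {𝒴 : Type*} {p : Fin 2 → 𝒴 → ℝ} (hp : IsJointPMF p)
    (hp0 : 0 < miBits p) {η : ℝ} (hη0 : 0 < η) (hη1 : η < 1) {M : ℕ}
    (hM : ⌊30 / (1 - η) * max (Real.logb 2 (1 / miBits p)) 1⌋₊ ≤ M) :
    η * miBits p ≤ quantMI p M := by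
  set L := max (Real.logb 2 (1 / miBits p)) 1
  have hL1 : 1 ≤ L := le_max_right _ _
  have hsqrt (x : Fin 2) : miBits p ≤ 3 * √(marginalX p x) :=
    hp.miBits_le_entropy.trans
      (sum_negMulLog_div_log_two_le hp.marginalX_nonneg hp.sum_marginalX x)
  have hcells := two_mul_floor_add_one_le (M := M) (s := L / (1 - η))
    ((one_le_div₀ (by linarith)).2 (by linarith))
    (logb_one_add_six_mul_div_le hp0 (by linarith) hη1 (by linarith) (le_max_left _ _))
    (by rwa [mul_div_assoc', mul_div_right_comm])
  obtain ⟨f, hf⟩ := hp.exists_miBits_add_le_mul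
    (fun x => Real.sqrt_pos.1 (by linarith [hsqrt x])) (by linarith)
    (fun x => neg_logb_le_six_mul_max hp0 (hsqrt x)) hp0
    ((one_lt_div (by linarith)).2 (by linarith)) hcells
  rw [div_mul_eq_mul_div, le_div_iff₀ (by linarith)] at hf
  linarith [hp.miBits_quantJoint_le_quantMI f]

/-- Theorem 3: for binary `X` with `I(X;Y) = β ∈ (0,1]` and any `η ∈ (0,1)`,
`⌊(52/(1-η)) max{log(1/β), 1}⌋` quantization levels retain a fraction `η` of the
mutual information. -/
theorem binary_lower_bound {𝒴 : Type*} [Countable 𝒴] (p : Fin 2 → 𝒴 → ℝ)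
    (hp : IsJointPMF p) (β : ℝ) (hβ : miBits p = β) (hβ0 : 0 < β) (hβ1 : β ≤ 1)
    (η : ℝ) (hη0 : 0 < η) (hη1 : η < 1) :
    η * β ≤ quantMI p ⌊52 / (1 - η) * max (Real.logb 2 (1 / β)) 1⌋₊ := by
  subst hβ
  exact binary_lower_bound_general hp hβ0 hη0 hη1 (Nat.floor_mono (by gcongr; linarith))
end

section
/- For any 0 < β ≤ 1, there exists a joint distribution P_{XY} with |𝒳| = 2 and I(X;Y) ≥ β such that for every positive integer M, I(X;[Y]_M) ≤ 2M · β / ln( e·log(e) / (2β) ). -/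
/-!
Let `X` be a fair bit, `T = P(X = 0 | Y) - P(X = 1 | Y)` its posterior bias, and `G(s)` the
information, in nats, carried by a bias `s`.  Then `I(X; Y) = E[G(T)] / ln 2`, and a quantizer cell
`A` contributes `P(A) G(E[T | A]) / ln 2`.  Take `T` symmetric with `P(T ≥ t) ≈ a / t²`: since
`G(s) ≈ s² / 2` near `0`, every scale of `T` carries the same amount of information, but one cell
collects only about as much as one scale carries.

Concretely, `T` takes the values `± q ^ (-k)` for `k ≤ n`, with `P(T ≥ q ^ (-k)) = a q ^ (2k)`.

* Since `G(1) = ln 2` and `G(s) ≥ s² / 2`, the information is at least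
  `a (2 ln 2 + n (1 - q⁻²)) / ln 2`.  The total mass is one when `q ^ (2n) = 1 / (2a)`, and then
  `n (1 - q⁻²) → -ln (2a)` as `n → ∞`.
* For `0 < τ ≤ 1` one has `E (T - τ)⁺ ≤ a (1 / τ - 1)`, hence
  `|E[T; A]| ≤ τ P(A) + a (1 / τ - 1)`.  With `τ = √(a / P(A))` this is `|E[T | A]| ≤ 2τ - τ²`, and
  `G(s) ≤ s² / 2 + s³ / 4` turns it into `P(A) G(E[T | A]) ≤ 2a`.

With `b = 2 β ln 2` and `L = 1 - ln b`, the denominator in the claim is `L`, and one takes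
`a = b / (2L)`; when `b ≥ 1`, the choice `a = 1 / 2` works.
-/

open scoped BigOperators

/-- The information, in nats, that an observation gives about a fair bit when it leaves the bit with
posterior probabilities `(1 + s) / 2` and `(1 - s) / 2`. -/
noncomputable def biasInfo (s : ℝ) : ℝ :=
  Real.log 2 - Real.binEntropy ((1 + s) / 2)

lemma biasInfo_eq (s : ℝ) :
    biasInfo s = ((1 + s) * Real.log (1 + s) + (1 - s) * Real.log (1 - s)) / 2 := by
  rw [biasInfo, Real.binEntropy_eq_negMulLog_add_negMulLog_one_sub,
    show (1 + s) / 2 = (1 + s) * 2⁻¹ by ring, show 1 - (1 + s) * 2⁻¹ = (1 - s) * 2⁻¹ by ring,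
    Real.negMulLog_mul, Real.negMulLog_mul]
  simp only [Real.negMulLog, Real.log_inv]
  ring

lemma biasInfo_neg (s : ℝ) : biasInfo (-s) = biasInfo s := by
  rw [biasInfo, show (1 + -s) / 2 = 1 - (1 + s) / 2 by ring, Real.binEntropy_one_sub, biasInfo]

lemma biasInfo_abs (s : ℝ) : biasInfo |s| = biasInfo s := by
  rcases abs_choice s with h | h <;> rw [h]
  exact biasInfo_neg s

lemma biasInfo_zero : biasInfo 0 = 0 := by simp [biasInfo]

lemma biasInfo_one : biasInfo 1 = Real.log 2 := by simp [biasInfo]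

lemma biasInfo_le_log_two {s : ℝ} (hs : |s| ≤ 1) : biasInfo s ≤ Real.log 2 := by
  have ⟨hl, hu⟩ := abs_le.1 hs
  have := Real.binEntropy_nonneg (p := (1 + s) / 2) (by linarith) (by linarith)
  rw [biasInfo]
  linarith

lemma continuous_biasInfo : Continuous biasInfo := by
  unfold biasInfo
  fun_prop

lemma hasDerivAt_biasInfo {s : ℝ} (hs : s ∈ Set.Ioo (-1) 1) :
    HasDerivAt biasInfo ((Real.log (1 + s) - Real.log (1 - s)) / 2) s := by
  obtain ⟨hl, hu⟩ := hs
  have hp : HasDerivAt (fun s : ℝ => (1 + s) / 2) (1 / 2) s :=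
    ((hasDerivAt_id s).const_add 1).div_const 2
  have h := ((Real.hasDerivAt_binEntropy (p := (1 + s) / 2) (by linarith) (by linarith)).comp s
    hp).const_sub (Real.log 2)
  refine h.congr_deriv ?_
  rw [show 1 - (1 + s) / 2 = (1 - s) / 2 by ring, Real.log_div (by linarith) two_ne_zero,
    Real.log_div (by linarith) two_ne_zero]
  ring

lemma convexOn_biasInfo_sub_sq :
    ConvexOn ℝ (Set.Icc (-1) 1) (fun s : ℝ => biasInfo s - s ^ 2 / 2) := by
  apply convexOn_of_hasDerivWithinAt2_nonneg (convex_Icc (-1) 1)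
    (f' := fun s => (Real.log (1 + s) - Real.log (1 - s)) / 2 - s)
    (f'' := fun s => ((1 + s)⁻¹ + (1 - s)⁻¹) / 2 - 1)
    (continuous_biasInfo.sub (by fun_prop)).continuousOn
  all_goals
    rw [interior_Icc]
    rintro s ⟨hl, hu⟩
    have hp : 0 < 1 + s := by linarith
    have hm : 0 < 1 - s := by linarith
  · have h := (hasDerivAt_biasInfo ⟨hl, hu⟩).sub (((hasDerivAt_id s).pow 2).div_const 2)
    exact (h.congr_deriv (by simp)).hasDerivWithinAt
  · have h := (((((hasDerivAt_id s).const_add 1).log hp.ne').sub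
      (((hasDerivAt_id s).const_sub 1).log hm.ne')).div_const 2).sub (hasDerivAt_id s)
    exact (h.congr_deriv (by simp only [id]; ring)).hasDerivWithinAt
  · have h : ((1 + s)⁻¹ + (1 - s)⁻¹) / 2 - 1 = s ^ 2 / ((1 + s) * (1 - s)) := by
      field_simp
      ring
    rw [h]
    positivity

lemma sq_div_two_le_biasInfo {s : ℝ} (hs : |s| ≤ 1) : s ^ 2 / 2 ≤ biasInfo s := by
  have ⟨hl, hu⟩ := abs_le.1 hs
  have hneg : -s ∈ Set.Icc (-1 : ℝ) 1 := ⟨by linarith, by linarith⟩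
  -- The convex function `biasInfo s - s ^ 2 / 2` is even, hence minimal at `0`.
  have h := convexOn_biasInfo_sub_sq.2 ⟨hl, hu⟩ hneg one_half_pos.le one_half_pos.le (add_halves 1)
  simp only [smul_eq_mul, mul_neg, add_neg_cancel, biasInfo_neg, biasInfo_zero] at h
  linarith

lemma one_add_mul_log_one_add_le {s : ℝ} (hs : 0 ≤ s) :
    (1 + s) * Real.log (1 + s) ≤ s + s ^ 2 / 2 := by
  have hp : 0 < 1 + s := by linarith
  have h := Real.self_le_sinh_iff.2 (Real.log_nonneg (by linarith : 1 ≤ 1 + s))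
  rw [Real.sinh_log hp] at h
  calc (1 + s) * Real.log (1 + s) ≤ (1 + s) * ((1 + s - (1 + s)⁻¹) / 2) := by gcongr
    _ = s + s ^ 2 / 2 := by field_simp; ring

lemma log_one_sub_le {s : ℝ} (h0 : 0 ≤ s) (h1 : s < 1) :
    Real.log (1 - s) ≤ -(s + s ^ 2 / 2) := by
  have hseries := Real.hasSum_pow_div_log_of_abs_lt_one (by rwa [abs_of_nonneg h0])
  refine le_neg_of_le_neg ?_
  calc s + s ^ 2 / 2 = ∑ i ∈ Finset.range 2, s ^ (i + 1) / ((i : ℝ) + 1) := by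
        norm_num [Finset.sum_range_succ]
    _ ≤ -Real.log (1 - s) := sum_le_hasSum _ (fun i _ => by positivity) hseries

lemma biasInfo_le_sq_add_cube {s : ℝ} (h0 : 0 ≤ s) (h1 : s ≤ 1) :
    biasInfo s ≤ s ^ 2 / 2 + s ^ 3 / 4 := by
  have hplus := one_add_mul_log_one_add_le h0
  have hminus : (1 - s) * Real.log (1 - s) ≤ (1 - s) * -(s + s ^ 2 / 2) := by
    rcases h1.lt_or_eq with h | rfl
    · exact mul_le_mul_of_nonneg_left (log_one_sub_le h0 h) (by linarith)
    · simp
  rw [biasInfo_eq]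
  linarith

section Relabel

variable {𝒳 α γ : Type*} {e : α → γ}

/-- The joint mass function of `(X, e(Y))` when `(X, Y)` has joint mass function `p` and `e` is
injective. -/
noncomputable def relabel (e : α → γ) (p : 𝒳 → α → ℝ) : 𝒳 → γ → ℝ :=
  fun x => Function.extend e (p x) 0

lemma relabel_apply (he : Function.Injective e) (p : 𝒳 → α → ℝ) (x : 𝒳) (y : α) :
    relabel e p x (e y) = p x y :=
  he.extend_apply _ _ _

lemma relabel_eq_zero (p : 𝒳 → α → ℝ) (x : 𝒳) {z : γ} (hz : z ∉ Set.range e) :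
    relabel e p x z = 0 :=
  Function.extend_apply' _ _ _ hz

lemma tsum_relabel (he : Function.Injective e) (p : 𝒳 → α → ℝ) (x : 𝒳) :
    ∑' z, relabel e p x z = ∑' y, p x y :=
  tsum_extend_zero he _

lemma IsJointPMF.relabel (he : Function.Injective e) {p : 𝒳 → α → ℝ} (hp : IsJointPMF p) :
    IsJointPMF (relabel e p) := by
  obtain ⟨hnonneg, hsummable, hsum⟩ := hp
  refine ⟨fun x z => ?_, ?_, by simpa only [tsum_relabel he] using hsum⟩
  · by_cases hz : z ∈ Set.range e
    · obtain ⟨y, rfl⟩ := hz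
      exact (hnonneg x y).trans_eq (relabel_apply he p x y).symm
    · exact (relabel_eq_zero p x hz).ge
  · refine ((Function.injective_id.prodMap he).summable_iff fun xz hxz => ?_).1 ?_
    · exact relabel_eq_zero p _ fun ⟨y, hy⟩ => hxz ⟨(xz.1, y), Prod.ext rfl hy⟩
    · simpa only [Function.comp_def, Prod.map_fst, Prod.map_snd, id, relabel_apply he]
        using hsummable

lemma miBits_relabel (he : Function.Injective e) (p : 𝒳 → α → ℝ) :
    miBits (relabel e p) = miBits p := by
  unfold miBits
  refine tsum_congr fun x => ?_
  rw [← he.tsum_eq]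
  · simp only [tsum_relabel he, relabel_apply he]
  · refine Function.support_subset_iff'.2 fun z hz => ?_
    rw [relabel_eq_zero p x hz, zero_mul]

lemma quantJoint_relabel (he : Function.Injective e) (p : 𝒳 → α → ℝ) {M : ℕ} (f : γ → Fin M) :
    quantJoint (relabel e p) f = quantJoint p (f ∘ e) := by
  funext x m
  unfold quantJoint
  rw [← he.tsum_eq]
  · simp only [relabel_apply he, Function.comp_apply]
  · refine Function.support_subset_iff'.2 fun z hz => ?_
    rw [relabel_eq_zero p x hz, ite_self]

lemma quantMI_relabel_le (he : Function.Injective e) {p : 𝒳 → α → ℝ} {M : ℕ} (hM : 0 < M) {c : ℝ}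
    (h : ∀ f : α → Fin M, miBits (quantJoint p f) ≤ c) : quantMI (relabel e p) M ≤ c := by
  have : Nonempty (Fin M) := ⟨⟨0, hM⟩⟩
  refine ciSup_le fun f => ?_
  rw [quantJoint_relabel he]
  exact h _

end Relabel

/-- The joint mass function of a bit `X` and an observation `Y` for which
`P y = P(X = 0, Y = y) + P(X = 1, Y = y)` and `U y = P(X = 0, Y = y) - P(X = 1, Y = y)`. -/
noncomputable def bitJoint {α : Type*} (P U : α → ℝ) : Fin 2 → α → ℝ :=
  ![fun y => (P y + U y) / 2, fun y => (P y - U y) / 2]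

/-- `bitJoint P U` is a joint mass function whose bit is fair. -/
structure IsFairBitLaw {α : Type*} [Fintype α] (P U : α → ℝ) : Prop where
  abs_le : ∀ y, |U y| ≤ P y
  sum_mass : ∑ y, P y = 1
  sum_bias : ∑ y, U y = 0

lemma mul_logb_add_mul_logb_eq_mul_biasInfo {P U : ℝ} (hU : |U| ≤ P) :
    (P + U) / 2 * Real.logb 2 ((P + U) / 2 / (1 / 2 * P)) +
      (P - U) / 2 * Real.logb 2 ((P - U) / 2 / (1 / 2 * P)) =
        P * biasInfo (U / P) / Real.log 2 := by
  rcases ((abs_nonneg U).trans hU).eq_or_lt with rfl | hP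
  · have : U = 0 := by simpa using hU
    simp [this]
  · have eplus : P + U = P * (1 + U / P) := by field_simp
    have eminus : P - U = P * (1 - U / P) := by field_simp
    have ecancel (x : ℝ) : P * x / 2 / (1 / 2 * P) = x := by field_simp
    rw [eplus, eminus, ecancel, ecancel, biasInfo_eq, Real.logb, Real.logb]
    ring

lemma quantJoint_bitJoint {α : Type*} [Fintype α] (P U : α → ℝ) {M : ℕ} (f : α → Fin M) :
    quantJoint (bitJoint P U) f =
      bitJoint (fun m => ∑ y with f y = m, P y) (fun m => ∑ y with f y = m, U y) := by
  funext x m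
  fin_cases x <;>
    simp [quantJoint, bitJoint, tsum_fintype, ← Finset.sum_filter, ← Finset.sum_div,
      Finset.sum_add_distrib, Finset.sum_sub_distrib]

namespace IsFairBitLaw

variable {α : Type*} [Fintype α] {P U : α → ℝ}

lemma tsum_bitJoint (h : IsFairBitLaw P U) (x : Fin 2) : ∑' y, bitJoint P U x y = 1 / 2 := by
  fin_cases x <;>
    simp [bitJoint, tsum_fintype, ← Finset.sum_div, Finset.sum_add_distrib,
      Finset.sum_sub_distrib, h.sum_mass, h.sum_bias]

lemma isJointPMF (h : IsFairBitLaw P U) : IsJointPMF (bitJoint P U) := by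
  refine ⟨Fin.forall_fin_two.2 ⟨fun y => ?_, fun y => ?_⟩, Summable.of_finite, ?_⟩
  · exact div_nonneg (by linarith [h.abs_le y, neg_abs_le (U y)]) zero_le_two
  · exact div_nonneg (by linarith [h.abs_le y, le_abs_self (U y)]) zero_le_two
  · simp only [h.tsum_bitJoint, tsum_fintype, Fin.sum_univ_two]
    norm_num

lemma miBits_eq (h : IsFairBitLaw P U) :
    miBits (bitJoint P U) = (∑ y, P y * biasInfo (U y / P y)) / Real.log 2 := by
  have hmarginal (y : α) : ∑' x, bitJoint P U x y = P y := by
    simp only [tsum_fintype, Fin.sum_univ_two, bitJoint, Matrix.cons_val_zero, Matrix.cons_val_one]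
    ring
  simp only [miBits, h.tsum_bitJoint, hmarginal, tsum_fintype, Fin.sum_univ_two]
  rw [← Finset.sum_add_distrib, Finset.sum_div]
  exact Finset.sum_congr rfl fun y _ =>
    mul_logb_add_mul_logb_eq_mul_biasInfo (h.abs_le y)

lemma fiberwise (h : IsFairBitLaw P U) {M : ℕ} (f : α → Fin M) :
    IsFairBitLaw (fun m => ∑ y with f y = m, P y) (fun m => ∑ y with f y = m, U y) where
  abs_le _ := (Finset.abs_sum_le_sum_abs _ _).trans (Finset.sum_le_sum fun y _ => h.abs_le y)
  sum_mass := by rw [Finset.sum_fiberwise, h.sum_mass]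
  sum_bias := by rw [Finset.sum_fiberwise, h.sum_bias]

end IsFairBitLaw

lemma abs_sum_le_of_sum_posPart_le {α : Type*} [Fintype α] {P U : α → ℝ} {τ c : ℝ}
    (hpos : ∑ y, (U y - τ * P y)⁺ ≤ c) (hneg : ∑ y, (-U y - τ * P y)⁺ ≤ c) (A : Finset α) :
    |∑ y ∈ A, U y| ≤ τ * ∑ y ∈ A, P y + c := by
  have hsum (V : α → ℝ) (hV : ∑ y, (V y - τ * P y)⁺ ≤ c) :
      ∑ y ∈ A, V y ≤ τ * ∑ y ∈ A, P y + c :=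
    calc ∑ y ∈ A, V y
        ≤ ∑ y ∈ A, (τ * P y + (V y - τ * P y)⁺) :=
          Finset.sum_le_sum fun y _ => sub_le_iff_le_add'.1 (le_posPart _)
      _ = τ * ∑ y ∈ A, P y + ∑ y ∈ A, (V y - τ * P y)⁺ := by
          rw [Finset.sum_add_distrib, Finset.mul_sum]
      _ ≤ τ * ∑ y ∈ A, P y + ∑ y, (V y - τ * P y)⁺ := by
          gcongr
          exact Finset.subset_univ A
      _ ≤ τ * ∑ y ∈ A, P y + c := by gcongr
  refine abs_le'.2 ⟨hsum U hpos, ?_⟩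
  rw [← Finset.sum_neg_distrib]
  exact hsum (fun y => -U y) hneg

lemma biasInfo_le_two_mul_sq {s τ : ℝ} (hs0 : 0 ≤ s) (hs1 : s ≤ 1)
    (hs : s ≤ 2 * τ - τ ^ 2) : biasInfo s ≤ 2 * τ ^ 2 :=
  calc biasInfo s
      ≤ s ^ 2 / 2 + s ^ 3 / 4 := biasInfo_le_sq_add_cube hs0 hs1
    _ ≤ (2 * τ - τ ^ 2) ^ 2 / 2 + (2 * τ - τ ^ 2) ^ 3 / 4 := by gcongr
    _ = 2 * τ ^ 2 - τ ^ 4 * ((τ - 3) ^ 2 + 1) / 4 := by ring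
    _ ≤ 2 * τ ^ 2 := sub_le_self _ (by positivity)

lemma mul_biasInfo_div_le {P U a : ℝ} (ha : 0 < a) (hU : |U| ≤ P)
    (h : ∀ τ ∈ Set.Ioc 0 1, |U| ≤ τ * P + a * (1 / τ - 1)) : P * biasInfo (U / P) ≤ 2 * a := by
  rcases ((abs_nonneg U).trans hU).eq_or_lt with rfl | hP
  · linarith
  have habs : |U / P| = |U| / P := by rw [abs_div, abs_of_pos hP]
  have hle_one : |U / P| ≤ 1 := habs ▸ (div_le_one hP).2 hU
  rcases le_total P a with hPa | haP
  · have hlog : Real.log 2 ≤ 2 := Real.log_two_lt_d9.le.trans (by norm_num)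
    calc P * biasInfo (U / P) ≤ P * 2 := by gcongr; exact (biasInfo_le_log_two hle_one).trans hlog
      _ ≤ 2 * a := by linarith
  · -- This threshold minimizes `τ * P + a * (1 / τ - 1)`.
    set τ := √(a / P)
    have hτ0 : 0 < τ := Real.sqrt_pos.2 (by positivity)
    have hτ1 : τ ≤ 1 := Real.sqrt_le_one.2 ((div_le_one hP).2 haP)
    have hτsq : a = τ ^ 2 * P := by rw [Real.sq_sqrt (by positivity)]; field_simp
    have hbias : |U / P| ≤ 2 * τ - τ ^ 2 := by
      rw [habs, div_le_iff₀ hP]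
      calc |U| ≤ τ * P + a * (1 / τ - 1) := h τ ⟨hτ0, hτ1⟩
        _ = (2 * τ - τ ^ 2) * P := by rw [hτsq]; field_simp; ring
    calc P * biasInfo (U / P) = P * biasInfo |U / P| := by rw [biasInfo_abs]
      _ ≤ P * (2 * τ ^ 2) := by
          gcongr
          exact biasInfo_le_two_mul_sq (abs_nonneg _) hle_one hbias
      _ = 2 * a := by rw [hτsq]; ring

lemma IsFairBitLaw.miBits_quantJoint_le {α : Type*} [Fintype α] {P U : α → ℝ} {a : ℝ} (ha : 0 < a)
    (h : IsFairBitLaw P U)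
    (hpos : ∀ τ ∈ Set.Ioc 0 1, ∑ y, (U y - τ * P y)⁺ ≤ a * (1 / τ - 1))
    (hneg : ∀ τ ∈ Set.Ioc 0 1, ∑ y, (-U y - τ * P y)⁺ ≤ a * (1 / τ - 1))
    {M : ℕ} (f : α → Fin M) :
    miBits (quantJoint (bitJoint P U) f) ≤ 2 * M * a / Real.log 2 := by
  rw [quantJoint_bitJoint, (h.fiberwise f).miBits_eq]
  gcongr
  calc ∑ m, (∑ y with f y = m, P y) *
        biasInfo ((∑ y with f y = m, U y) / ∑ y with f y = m, P y)
      ≤ ∑ _m : Fin M, 2 * a := Finset.sum_le_sum fun m _ =>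
        mul_biasInfo_div_le ha ((h.fiberwise f).abs_le m) fun τ hτ =>
          abs_sum_le_of_sum_posPart_le (hpos τ hτ) (hneg τ hτ) _
    _ = 2 * M * a := by
        simp only [Finset.sum_const, Finset.card_univ, Fintype.card_fin, nsmul_eq_mul]
        ring

namespace IsFairBitLaw

variable {α : Type*} [Fintype α] {w t : α → ℝ}

/-- The posterior bias takes each of the values `t k` and `-t k` with probability `w k`. -/
lemma symmetric (hw : ∀ k, 0 ≤ w k) (ht : ∀ k, |t k| ≤ 1) (hsum : ∑ k, w k = 1 / 2) :
    IsFairBitLaw (Sum.elim w w) (Sum.elim (w * t) (-(w * t))) where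
  abs_le := by
    rintro (k | k) <;>
      simpa [abs_mul, abs_of_nonneg (hw k)] using mul_le_of_le_one_right (hw k) (ht k)
  sum_mass := by
    rw [Fintype.sum_sum_type]
    simp only [Sum.elim_inl, Sum.elim_inr, hsum, add_halves]
  sum_bias := by simp

lemma miBits_symmetric (h : IsFairBitLaw (Sum.elim w w) (Sum.elim (w * t) (-(w * t)))) :
    miBits (bitJoint (Sum.elim w w) (Sum.elim (w * t) (-(w * t)))) =
      2 * (∑ k, w k * biasInfo (t k)) / Real.log 2 := by
  have hcancel (k : α) : w k * biasInfo (w k * t k / w k) = w k * biasInfo (t k) := by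
    rcases eq_or_ne (w k) 0 with hw | hw
    · simp only [hw, zero_mul]
    · rw [mul_div_cancel_left₀ _ hw]
  rw [h.miBits_eq, Fintype.sum_sum_type]
  simp only [Sum.elim_inl, Sum.elim_inr, Pi.neg_apply, Pi.mul_apply, neg_div, biasInfo_neg, hcancel]
  ring

lemma miBits_quantJoint_symmetric_le {a : ℝ} (ha : 0 < a) (hw : ∀ k, 0 ≤ w k) (ht : ∀ k, 0 ≤ t k)
    (h : IsFairBitLaw (Sum.elim w w) (Sum.elim (w * t) (-(w * t))))
    (htail : ∀ τ ∈ Set.Ioc 0 1, ∑ k, (w k * t k - τ * w k)⁺ ≤ a * (1 / τ - 1))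
    {M : ℕ} (f : α ⊕ α → Fin M) :
    miBits (quantJoint (bitJoint (Sum.elim w w) (Sum.elim (w * t) (-(w * t)))) f) ≤
      2 * M * a / Real.log 2 := by
  have hzero {τ : ℝ} (hτ : 0 < τ) (k : α) : (-(w k * t k) - τ * w k)⁺ = 0 := by
    have := mul_nonneg (hw k) (ht k)
    have := mul_nonneg hτ.le (hw k)
    exact posPart_eq_zero.2 (by linarith)
  refine h.miBits_quantJoint_le ha (fun τ hτ => ?_) (fun τ hτ => ?_) f <;>
    simpa [Fintype.sum_sum_type, hzero hτ.1] using htail τ hτ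

end IsFairBitLaw

section ScaleMass

/-- Masses of the points `q ^ (-k)` for which the points above each scale `q ^ (-k)`, itself
included, have total mass `a * q ^ (2 * k)`: a discrete version of the tail `a / t ^ 2`. -/
noncomputable def scaleMass (a q : ℝ) : ℕ → ℝ
  | 0 => a
  | k + 1 => a * (q ^ (2 * (k + 1)) - q ^ (2 * k))

variable {a q : ℝ}

lemma scaleMass_nonneg (ha : 0 ≤ a) (hq : 1 ≤ q) (k : ℕ) : 0 ≤ scaleMass a q k := by
  cases k with
  | zero => exact ha
  | succ k => exact mul_nonneg ha (sub_nonneg.2 (pow_le_pow_right₀ hq (by lia)))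

lemma sum_scaleMass (a q : ℝ) (n : ℕ) :
    ∑ k ∈ Finset.range (n + 1), scaleMass a q k = a * q ^ (2 * n) := by
  induction n with
  | zero => simp [scaleMass]
  | succ n ih => rw [Finset.sum_range_succ, ih, scaleMass]; ring

lemma sum_scaleMass_mul_inv (a : ℝ) (hq : q ≠ 0) (n : ℕ) :
    ∑ k ∈ Finset.range (n + 1), scaleMass a q k * (q ^ k)⁻¹ =
      a + a * (1 + q⁻¹) * (q ^ n - 1) := by
  induction n with
  | zero => simp [scaleMass]
  | succ n ih =>
    rw [Finset.sum_range_succ, ih, scaleMass]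
    field_simp
    ring

lemma sum_scaleMass_mul_inv_sub_le {τ : ℝ} (ha : 0 ≤ a) (hq : 1 ≤ q) (hτ : 0 < τ) (n : ℕ) :
    ∑ k ∈ Finset.range (n + 1), (scaleMass a q k * (q ^ k)⁻¹ - τ * scaleMass a q k) ≤
      a * (1 / τ - 1) := by
  have hpow : 0 ≤ q ^ n - 1 := sub_nonneg.2 (one_le_pow₀ hq)
  have hinv : q⁻¹ ≤ 1 := inv_le_one_of_one_le₀ hq
  rw [Finset.sum_sub_distrib, ← Finset.mul_sum, sum_scaleMass,
    sum_scaleMass_mul_inv a (by positivity)]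
  calc a + a * (1 + q⁻¹) * (q ^ n - 1) - τ * (a * q ^ (2 * n))
      ≤ a + a * (1 + 1) * (q ^ n - 1) - τ * (a * q ^ (2 * n)) := by gcongr
    _ = a * (1 / τ - 1) - a * ((1 - τ * q ^ n) ^ 2 / τ) := by field_simp; ring
    _ ≤ a * (1 / τ - 1) := sub_le_self _ (by positivity)

lemma sum_posPart_scaleMass_le {τ : ℝ} (ha : 0 ≤ a) (hq : 1 ≤ q) (hτ : τ ∈ Set.Ioc 0 1) (n : ℕ) :
    ∑ k ∈ Finset.range (n + 1), (scaleMass a q k * (q ^ k)⁻¹ - τ * scaleMass a q k)⁺ ≤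
      a * (1 / τ - 1) := by
  have habove {m : ℕ} (hm : τ ≤ (q ^ m)⁻¹) :
      ∑ k ∈ Finset.range (m + 1), (scaleMass a q k * (q ^ k)⁻¹ - τ * scaleMass a q k)⁺ ≤
        a * (1 / τ - 1) := by
    refine le_of_eq_of_le (Finset.sum_congr rfl fun k hk => posPart_of_nonneg ?_)
      (sum_scaleMass_mul_inv_sub_le ha hq hτ.1 m)
    have hkm : τ ≤ (q ^ k)⁻¹ := hm.trans <| by
      gcongr
      exact Finset.mem_range_succ_iff.1 hk
    rw [mul_comm, ← sub_mul]
    exact mul_nonneg (sub_nonneg.2 hkm) (scaleMass_nonneg ha hq k)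
  induction n with
  | zero => exact habove (by simpa using hτ.2)
  | succ n ih =>
    rcases le_total τ (q ^ (n + 1))⁻¹ with h | h
    · exact habove h
    · have hlast :
          (scaleMass a q (n + 1) * (q ^ (n + 1))⁻¹ - τ * scaleMass a q (n + 1))⁺ = 0 := by
        rw [posPart_eq_zero, mul_comm, ← sub_mul]
        exact mul_nonpos_of_nonpos_of_nonneg (sub_nonpos.2 h) (scaleMass_nonneg ha hq _)
      rwa [Finset.sum_range_succ, hlast, add_zero]

lemma le_sum_scaleMass_mul_biasInfo (ha : 0 ≤ a) (hq : 1 ≤ q) (n : ℕ) :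
    a * Real.log 2 + n * (a * (1 - (q ^ 2)⁻¹) / 2) ≤
      ∑ k ∈ Finset.range (n + 1), scaleMass a q k * biasInfo (q ^ k)⁻¹ := by
  induction n with
  | zero => simp [scaleMass, biasInfo_one]
  | succ n ih =>
    have hscale : |(q ^ (n + 1))⁻¹| ≤ 1 := by
      rw [abs_of_nonneg (by positivity)]
      exact inv_le_one_of_one_le₀ (one_le_pow₀ hq)
    have hterm : a * (1 - (q ^ 2)⁻¹) / 2 ≤ scaleMass a q (n + 1) * biasInfo (q ^ (n + 1))⁻¹ :=
      calc a * (1 - (q ^ 2)⁻¹) / 2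
          = scaleMass a q (n + 1) * ((q ^ (n + 1))⁻¹ ^ 2 / 2) := by
            rw [scaleMass]
            field_simp
            ring
        _ ≤ _ := by
            gcongr
            · exact scaleMass_nonneg ha hq _
            · exact sq_div_two_le_biasInfo hscale
    rw [Finset.sum_range_succ]
    push_cast
    linarith

end ScaleMass

lemma exists_nat_pow_eq_exp {c ε : ℝ} (hc : 0 ≤ c) (hε : 0 < ε) :
    ∃ (n : ℕ) (q : ℝ), 1 ≤ q ∧ q ^ (2 * n) = Real.exp c ∧ c - ε ≤ n * (1 - (q ^ 2)⁻¹) := by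
  obtain ⟨n, hn⟩ := exists_nat_gt (c ^ 2 / ε)
  have hn0 : (0 : ℝ) < n := lt_of_le_of_lt (by positivity) hn
  have hsq : Real.exp (c / (2 * n)) ^ 2 = Real.exp (c / n) := by
    rw [← Real.exp_nat_mul]
    congr 1
    push_cast
    field_simp
  refine ⟨n, Real.exp (c / (2 * n)), Real.one_le_exp (by positivity), ?_, ?_⟩
  · rw [pow_mul, hsq, ← Real.exp_nat_mul, mul_div_cancel₀ _ hn0.ne']
  · rw [hsq]
    calc c - ε ≤ n * (1 - (c / n + 1)⁻¹) := by
          have hmul : n * (1 - (c / n + 1)⁻¹) = n * c / (n + c) := by field_simp; ring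
          rw [div_lt_iff₀ hε] at hn
          rw [hmul, le_div_iff₀ (by positivity)]
          nlinarith
      _ ≤ n * (1 - (Real.exp (c / n))⁻¹) := by
          gcongr
          exact Real.add_one_le_exp _

lemma exists_joint_of_scaleMass {a q : ℝ} {n : ℕ} (ha : 0 < a) (hq : 1 ≤ q)
    (hmass : a * q ^ (2 * n) = 1 / 2) :
    ∃ p : Fin 2 → ℕ → ℝ, IsJointPMF p ∧
      a * (2 * Real.log 2 + n * (1 - (q ^ 2)⁻¹)) / Real.log 2 ≤ miBits p ∧
      ∀ M : ℕ, 0 < M → quantMI p M ≤ 2 * M * a / Real.log 2 := by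
  let w (k : Fin (n + 1)) : ℝ := scaleMass a q k
  let t (k : Fin (n + 1)) : ℝ := (q ^ (k : ℕ))⁻¹
  have hw (k) : 0 ≤ w k := scaleMass_nonneg ha.le hq k
  have ht (k) : 0 ≤ t k := by positivity
  have ht_one (k) : |t k| ≤ 1 := by
    rw [abs_of_nonneg (ht k)]
    exact inv_le_one_of_one_le₀ (one_le_pow₀ hq)
  have hsum : ∑ k, w k = 1 / 2 := by
    rw [Fin.sum_univ_eq_sum_range (scaleMass a q), sum_scaleMass, hmass]
  have hlaw := IsFairBitLaw.symmetric hw ht_one hsum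
  have hinj := Encodable.encode_injective (α := Fin (n + 1) ⊕ Fin (n + 1))
  refine ⟨relabel Encodable.encode (bitJoint _ _), hlaw.isJointPMF.relabel hinj, ?_,
    fun M hM => quantMI_relabel_le hinj hM (hlaw.miBits_quantJoint_symmetric_le ha hw ht ?_)⟩
  · rw [miBits_relabel hinj, hlaw.miBits_symmetric]
    refine div_le_div_of_nonneg_right ?_ (Real.log_nonneg one_le_two)
    rw [Fin.sum_univ_eq_sum_range fun k => scaleMass a q k * biasInfo (q ^ k)⁻¹]
    linarith [le_sum_scaleMass_mul_biasInfo ha.le hq n]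
  · intro τ hτ
    rw [Fin.sum_univ_eq_sum_range
      fun k => (scaleMass a q k * (q ^ k)⁻¹ - τ * scaleMass a q k)⁺]
    exact sum_posPart_scaleMass_le ha.le hq hτ n

lemma exists_joint_quantMI_le {a : ℝ} (ha0 : 0 < a) (ha1 : a ≤ 1 / 2) :
    ∃ p : Fin 2 → ℕ → ℝ, IsJointPMF p ∧
      max (2 * a) (a * (1 - Real.log (2 * a)) / Real.log 2) ≤ miBits p ∧
      ∀ M : ℕ, 0 < M → quantMI p M ≤ 2 * M * a / Real.log 2 := by
  have hlog : 2 / 3 < Real.log 2 := lt_trans (by norm_num) Real.log_two_gt_d9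
  have hlog_nonpos : Real.log (2 * a) ≤ 0 := Real.log_nonpos (by positivity) (by linarith)
  obtain ⟨n, q, hq, hpow, hn⟩ :=
    exists_nat_pow_eq_exp (neg_nonneg.2 hlog_nonpos) (ε := 1 / 3) (by norm_num)
  have hmass : a * q ^ (2 * n) = 1 / 2 := by
    rw [hpow, Real.exp_neg, Real.exp_log (by positivity)]
    field_simp
  obtain ⟨p, hp, hmi, hquant⟩ := exists_joint_of_scaleMass ha0 hq hmass
  refine ⟨p, hp, (max_le ?_ ?_).trans hmi, hquant⟩
  · rw [le_div_iff₀ (by positivity)]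
    have : 0 ≤ n * (1 - (q ^ 2)⁻¹) :=
      mul_nonneg n.cast_nonneg (sub_nonneg.2 (inv_le_one_of_one_le₀ (one_le_pow₀ hq)))
    nlinarith
  · gcongr
    linarith

lemma exists_tail_coefficient {b : ℝ} (hb : 0 < b) :
    ∃ a : ℝ, 0 < a ∧ a ≤ 1 / 2 ∧ 2 * a * (1 - Real.log b) ≤ b ∧
      (a = 1 / 2 ∨ b / 2 ≤ a * (1 - Real.log (2 * a))) := by
  rcases le_or_gt 1 b with hb1 | hb1
  · refine ⟨1 / 2, one_half_pos, le_rfl, ?_, Or.inl rfl⟩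
    linarith [Real.log_nonneg hb1]
  · set L := 1 - Real.log b
    have hL1 : 1 < L := by linarith [Real.log_neg hb hb1]
    have hdiv : 2 * (b / (2 * L)) = b / L := by field_simp
    refine ⟨b / (2 * L), by positivity, ?_, ?_, Or.inr ?_⟩
    · linarith [div_lt_one (by positivity : 0 < L) |>.2 (hb1.trans hL1)]
    · rw [hdiv, div_mul_cancel₀ _ (by positivity)]
    · calc b / 2 = b / (2 * L) * L := by field_simp
        _ ≤ b / (2 * L) * (1 - Real.log (2 * (b / (2 * L)))) := by
          gcongr
          rw [hdiv, Real.log_div hb.ne' (by positivity)]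
          linarith [Real.log_nonneg hL1.le]

lemma log_exp_one_mul_logb_div {β : ℝ} (hβ : 0 < β) :
    Real.log (Real.exp 1 * Real.logb 2 (Real.exp 1) / (2 * β)) =
      1 - Real.log (2 * β * Real.log 2) := by
  have hquot : Real.exp 1 * Real.logb 2 (Real.exp 1) / (2 * β) =
      Real.exp 1 / (2 * β * Real.log 2) := by
    rw [Real.logb, Real.log_exp]
    field_simp
  rw [hquot, Real.log_div (Real.exp_pos 1).ne' (by positivity), Real.log_exp]

/-- Theorem 5: for any `0 < β ≤ 1` there is a joint distribution with binary `X` and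
`I(X;Y) ≥ β` for which every `M`-level quantizer satisfies
`I(X;[Y]_M) ≤ 2 M β / ln(e log(e) / (2β))`. -/
theorem binary_upper_bound (β : ℝ) (hβ0 : 0 < β) (hβ1 : β ≤ 1) :
    ∃ p : Fin 2 → ℕ → ℝ, IsJointPMF p ∧ β ≤ miBits p ∧
      ∀ M : ℕ, 0 < M →
        quantMI p M ≤ 2 * (M : ℝ) * β /
          Real.log (Real.exp 1 * Real.logb 2 (Real.exp 1) / (2 * β)) := by
  have hlog2 : 0 < Real.log 2 := Real.log_pos one_lt_two
  set b := 2 * β * Real.log 2 with hb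
  have hb0 : 0 < b := by positivity
  have hlog_pos : 0 < 1 - Real.log b := by
    have : b < 2 := by nlinarith [Real.log_two_lt_d9]
    linarith [Real.log_le_sub_one_of_pos hb0]
  obtain ⟨a, ha0, ha1, hab, hinfo⟩ := exists_tail_coefficient hb0
  obtain ⟨p, hp, hmi, hquant⟩ := exists_joint_quantMI_le ha0 ha1
  refine ⟨p, hp, le_trans ?_ hmi, fun M hM => (hquant M hM).trans ?_⟩
  · rcases hinfo with rfl | hinfo
    · exact le_max_of_le_left (by linarith)
    · exact le_max_of_le_right ((le_div_iff₀ hlog2).2 (by linarith))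
  · rw [log_exp_one_mul_logb_div hβ0, div_le_div_iff₀ hlog2 hlog_pos]
    calc 2 * M * a * (1 - Real.log b) = M * (2 * a * (1 - Real.log b)) := by ring
      _ ≤ M * b := by gcongr
      _ = 2 * M * β * Real.log 2 := by rw [hb]; ring
end

section
/- Let X ∈ {1,2} be a binary random variable with Pr(X = 1) = p, jointly distributed with a discrete random variable Y, with I(X;Y) = β, and let f_MAP be the MAP quantizer: f_MAP(y) = 1 if Pr(X=1|Y=y) > 1/2, f_MAP(y) = 2 if Pr(X=1|Y=y) < 1/2, and f_MAP(y) is a fair coin flip over {1,2} (independent of (X,Y)) if Pr(X=1|Y=y) = 1/2. Then I(X; f_MAP(Y)) ≥ h(p) - h( (h(p) - β)/2 ), and consequently I(X; f_MAP(Y)) ≥ β + 2/5 - h(1/5) if β < 3/5, and I(X; f_MAP(Y)) ≥ 1 - h((1-β)/2) if β ≥ 3/5. -/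
/-!
Let `H(v)` be the entropy of a vector of nonnegative masses, homogeneous of degree one. Since
`-t log t` is concave, `H` is superadditive, hence monotone. Superadditivity over the values of `Y`
gives `H(X|Y) ≤ H(X)`. Applied to the columns of the joint mass of `(X, f(Y))`, each shifted by the
guess in `ℤ/2`, it gives Fano's inequality `H(X|f(Y)) ≤ H(X - f(Y)) = h(e)`, `e` being the error
probability. Monotonicity gives `2 min(a, b) = H(min(a, b), min(a, b)) ≤ H(a, b)`, and summing over
`Y` yields `2 e ≤ H(X|Y) = h(p) - β` for a MAP guess. So `e ≤ t ≤ 1/2` with `t = (h(p) - β) / 2`,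
and `I(X; f(Y)) ≥ h(p) - h(e) ≥ h(p) - h(t) = β + 2 t - h(t)`. The concave function `h(t) - 2 t` is
maximal where `h' = 2`, at `t = 1/5`, and increases before that point, where
`t ≤ (1 - β) / 2 ≤ 1/5` as soon as `β ≥ 3/5`.
-/

open scoped BigOperators

section BinaryEntropy

lemma hBin_eq_binEntropy_div_log_two (t : ℝ) : hBin t = Real.binEntropy t / Real.log 2 := by
  simp only [hBin, Real.binEntropy, Real.logb, Real.log_inv]
  ring

lemma hBin_one_sub (t : ℝ) : hBin (1 - t) = hBin t := by
  simp only [hBin_eq_binEntropy_div_log_two, Real.binEntropy_one_sub]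

lemma hBin_le_one (t : ℝ) : hBin t ≤ 1 := by
  rw [hBin_eq_binEntropy_div_log_two]
  exact div_le_one_of_le₀ Real.binEntropy_le_log_two (Real.log_nonneg one_le_two)

lemma continuous_hBin : Continuous hBin := by
  rw [funext hBin_eq_binEntropy_div_log_two]
  exact Real.binEntropy_continuous.div_const _

lemma hasDerivAt_hBin {t : ℝ} (ht : t ∈ Set.Ioo 0 1) :
    HasDerivAt hBin (Real.logb 2 ((1 - t) / t)) t := by
  rw [funext hBin_eq_binEntropy_div_log_two, Real.logb,
    Real.log_div (sub_pos.2 ht.2).ne' ht.1.ne']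
  exact (Real.hasDerivAt_binEntropy ht.1.ne' ht.2.ne).div_const _

lemma hasDerivAt_hBin_sub_mul (k : ℝ) {t : ℝ} (ht : t ∈ Set.Ioo 0 1) :
    HasDerivAt (fun s => hBin s - k * s) (Real.logb 2 ((1 - t) / t) - k) t := by
  simpa only [mul_one, id] using! (hasDerivAt_hBin ht).sub ((hasDerivAt_id t).const_mul k)

lemma antitoneOn_logb_one_sub_div :
    AntitoneOn (fun t : ℝ => Real.logb 2 ((1 - t) / t)) (Set.Ioo 0 1) := by
  rintro s ⟨hs0, -⟩ t ⟨ht0, ht1⟩ hst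
  refine Real.logb_le_logb_of_le one_lt_two (div_pos (sub_pos.2 ht1) ht0) ?_
  rw [div_le_div_iff₀ ht0 hs0]
  linarith

lemma monotoneOn_hBin_sub_slope_mul {c : ℝ} (hc : c ∈ Set.Ioo 0 1) :
    MonotoneOn (fun t => hBin t - Real.logb 2 ((1 - c) / c) * t) (Set.Icc 0 c) := by
  have hmem {t : ℝ} (ht : t ∈ interior (Set.Icc 0 c)) : t ∈ Set.Ioo 0 1 ∧ t ≤ c := by
    rw [interior_Icc] at ht
    exact ⟨⟨ht.1, ht.2.trans hc.2⟩, ht.2.le⟩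
  exact monotoneOn_of_hasDerivWithinAt_nonneg (convex_Icc 0 c)
    (continuous_hBin.sub (continuous_const_mul _)).continuousOn
    (fun t ht => (hasDerivAt_hBin_sub_mul _ (hmem ht).1).hasDerivWithinAt)
    fun t ht => sub_nonneg.2 (antitoneOn_logb_one_sub_div (hmem ht).1 hc (hmem ht).2)

lemma antitoneOn_hBin_sub_slope_mul {c : ℝ} (hc : c ∈ Set.Ioo 0 1) :
    AntitoneOn (fun t => hBin t - Real.logb 2 ((1 - c) / c) * t) (Set.Icc c 1) := by
  have hmem {t : ℝ} (ht : t ∈ interior (Set.Icc c 1)) : t ∈ Set.Ioo 0 1 ∧ c ≤ t := by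
    rw [interior_Icc] at ht
    exact ⟨⟨hc.1.trans ht.1, ht.2⟩, ht.1.le⟩
  exact antitoneOn_of_hasDerivWithinAt_nonpos (convex_Icc c 1)
    (continuous_hBin.sub (continuous_const_mul _)).continuousOn
    (fun t ht => (hasDerivAt_hBin_sub_mul _ (hmem ht).1).hasDerivWithinAt)
    fun t ht => sub_nonpos.2 (antitoneOn_logb_one_sub_div hc (hmem ht).1 (hmem ht).2)

lemma monotoneOn_hBin : MonotoneOn hBin (Set.Icc 0 (1 / 2)) := by
  have slope_half : Real.logb 2 ((1 - 1 / 2) / (1 / 2)) = 0 := by norm_num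
  simpa only [slope_half, zero_mul, sub_zero] using
    monotoneOn_hBin_sub_slope_mul (c := 1 / 2) (by norm_num)

lemma hBin_slope_one_fifth : Real.logb 2 ((1 - 1 / 5) / (1 / 5)) = 2 := by
  rw [show ((1 - 1 / 5) / (1 / 5) : ℝ) = 2 ^ (2 : ℝ) by norm_num,
    Real.logb_rpow two_pos (by norm_num)]

lemma monotoneOn_hBin_sub_two_mul : MonotoneOn (fun t => hBin t - 2 * t) (Set.Icc 0 (1 / 5)) := by
  simpa only [hBin_slope_one_fifth] using monotoneOn_hBin_sub_slope_mul (c := 1 / 5) (by norm_num)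

lemma isMaxOn_hBin_sub_two_mul : IsMaxOn (fun t => hBin t - 2 * t) (Set.Icc 0 1) (1 / 5) := by
  rintro t ⟨h0, h1⟩
  rcases le_total t (1 / 5) with h | h
  · exact monotoneOn_hBin_sub_two_mul ⟨h0, h⟩ (by norm_num) h
  · have hanti := antitoneOn_hBin_sub_slope_mul (c := 1 / 5) (by norm_num)
    simp only [hBin_slope_one_fifth] at hanti
    exact hanti (by norm_num) ⟨h, h1⟩ h

end BinaryEntropy

section MassEntropy

variable {𝒳 𝒴 : Type*} [Fintype 𝒳]

/-- The Shannon entropy, in bits, of the distribution proportional to the nonnegative masses `v`,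
multiplied by the total mass; keeping the masses unnormalized makes it superadditive. -/
noncomputable def massEntropy (v : 𝒳 → ℝ) : ℝ :=
  ∑ x, -(v x * Real.logb 2 (v x / ∑ z, v z))

/-- The conditional entropy `H(X|Y)`, in bits, of a joint mass function `P` of `(X, Y)`. -/
noncomputable def condEntropy (P : 𝒳 → 𝒴 → ℝ) : ℝ :=
  ∑' y, massEntropy fun x => P x y

lemma neg_mul_logb_div_nonneg {a s : ℝ} (ha : 0 ≤ a) (has : a ≤ s) :
    0 ≤ -(a * Real.logb 2 (a / s)) :=
  neg_nonneg.2 <| mul_nonpos_of_nonneg_of_nonpos ha <|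
    Real.logb_nonpos one_lt_two (div_nonneg ha (ha.trans has))
      (div_le_one_of_le₀ has (ha.trans has))

lemma neg_mul_logb_div_eq (a : ℝ) {s : ℝ} (hs : s ≠ 0) :
    -(a * Real.logb 2 (a / s)) = s * (Real.negMulLog (a / s) / Real.log 2) := by
  rw [Real.negMulLog, Real.logb]
  field_simp

/-- The log sum inequality: `(a, s) ↦ s * negMulLog (a / s)` is the perspective of a concave
function. -/
lemma neg_mul_logb_div_add_le {a b s t : ℝ} (ha : 0 ≤ a) (hb : 0 ≤ b) (has : a ≤ s)
    (hbt : b ≤ t) :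
    -(a * Real.logb 2 (a / s)) + -(b * Real.logb 2 (b / t)) ≤
      -((a + b) * Real.logb 2 ((a + b) / (s + t))) := by
  rcases (ha.trans has).eq_or_lt with rfl | hs
  · simp [le_antisymm has ha]
  rcases (hb.trans hbt).eq_or_lt with rfl | ht
  · simp [le_antisymm hbt hb]
  have hconcave := Real.concaveOn_negMulLog.2 (Set.mem_Ici.2 (div_nonneg ha hs.le))
    (Set.mem_Ici.2 (div_nonneg hb ht.le)) (div_nonneg hs.le (add_pos hs ht).le)
    (div_nonneg ht.le (add_pos hs ht).le) (by field_simp)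
  have hmean : s / (s + t) * (a / s) + t / (s + t) * (b / t) = (a + b) / (s + t) := by field_simp
  simp only [smul_eq_mul, hmean] at hconcave
  rw [neg_mul_logb_div_eq a hs.ne', neg_mul_logb_div_eq b ht.ne',
    neg_mul_logb_div_eq _ (add_pos hs ht).ne']
  calc s * (Real.negMulLog (a / s) / Real.log 2) + t * (Real.negMulLog (b / t) / Real.log 2)
      = (s + t) * ((s / (s + t) * Real.negMulLog (a / s) +
          t / (s + t) * Real.negMulLog (b / t)) / Real.log 2) := by field_simp
    _ ≤ (s + t) * (Real.negMulLog ((a + b) / (s + t)) / Real.log 2) := by gcongr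

lemma le_sum_of_nonneg {v : 𝒳 → ℝ} (hv : 0 ≤ v) (x : 𝒳) : v x ≤ ∑ x', v x' :=
  Finset.single_le_sum (fun x' _ => hv x') (Finset.mem_univ x)

lemma massEntropy_nonneg {v : 𝒳 → ℝ} (hv : 0 ≤ v) : 0 ≤ massEntropy v :=
  Finset.sum_nonneg fun x _ => neg_mul_logb_div_nonneg (hv x) (le_sum_of_nonneg hv x)

lemma massEntropy_add_le {v w : 𝒳 → ℝ} (hv : 0 ≤ v) (hw : 0 ≤ w) :
    massEntropy v + massEntropy w ≤ massEntropy (v + w) := by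
  simp only [massEntropy, Pi.add_apply, Finset.sum_add_distrib]
  rw [← Finset.sum_add_distrib]
  exact Finset.sum_le_sum fun x _ =>
    neg_mul_logb_div_add_le (hv x) (hw x) (le_sum_of_nonneg hv x) (le_sum_of_nonneg hw x)

lemma massEntropy_mono {v w : 𝒳 → ℝ} (hv : 0 ≤ v) (hvw : v ≤ w) :
    massEntropy v ≤ massEntropy w := by
  have hdiff : 0 ≤ w - v := sub_nonneg.2 hvw
  calc massEntropy v ≤ massEntropy v + massEntropy (w - v) :=
        le_add_of_nonneg_right (massEntropy_nonneg hdiff)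
    _ ≤ massEntropy (v + (w - v)) := massEntropy_add_le hv hdiff
    _ = massEntropy w := by rw [add_sub_cancel]

lemma sum_massEntropy_le {ι : Type*} {v : ι → 𝒳 → ℝ} (hv : ∀ i, 0 ≤ v i) (u : Finset ι) :
    ∑ i ∈ u, massEntropy (v i) ≤ massEntropy (∑ i ∈ u, v i) := by
  classical
  induction u using Finset.induction_on with
  | empty => simp [massEntropy]
  | insert i u hi ih =>
    rw [Finset.sum_insert hi, Finset.sum_insert hi]
    exact (add_le_add_right ih _).trans
      (massEntropy_add_le (hv i) (Finset.sum_nonneg fun j _ => hv j))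

lemma massEntropy_const (c : ℝ) :
    massEntropy (fun _ : 𝒳 => c) = Fintype.card 𝒳 * c * Real.logb 2 (Fintype.card 𝒳) := by
  rcases eq_or_ne c 0 with rfl | hc
  · simp [massEntropy]
  · have hinv : c / (Fintype.card 𝒳 * c) = (Fintype.card 𝒳 : ℝ)⁻¹ := by
      rw [← div_div, div_right_comm, div_self hc, one_div]
    simp [massEntropy, hinv, Real.logb_inv, mul_assoc]

lemma massEntropy_comp_equiv {𝒳' : Type*} [Fintype 𝒳'] (v : 𝒳 → ℝ) (e : 𝒳' ≃ 𝒳) :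
    massEntropy (v ∘ e) = massEntropy v := by
  simp only [massEntropy, Function.comp_apply, e.sum_comp v]
  exact e.sum_comp fun x => -(v x * Real.logb 2 (v x / ∑ x', v x'))

lemma massEntropy_eq_of_sum_eq_one {v : 𝒳 → ℝ} (hv : ∑ x, v x = 1) :
    massEntropy v = ∑ x, -(v x * Real.logb 2 (v x)) := by
  simp only [massEntropy, hv, div_one]

lemma massEntropy_eq_hBin {v : Fin 2 → ℝ} (hv : ∑ x, v x = 1) : massEntropy v = hBin (v 0) := by
  have h1 : v 1 = 1 - v 0 := by rw [← hv, Fin.sum_univ_two]; ring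
  rw [massEntropy_eq_of_sum_eq_one hv, Fin.sum_univ_two, h1, hBin]
  ring

lemma two_mul_min_le_massEntropy {v : Fin 2 → ℝ} (hv : 0 ≤ v) :
    2 * min (v 0) (v 1) ≤ massEntropy v := by
  calc 2 * min (v 0) (v 1) = massEntropy fun _ : Fin 2 => min (v 0) (v 1) := by
        simp [massEntropy_const]
    _ ≤ massEntropy v := massEntropy_mono (fun _ => le_min (hv 0) (hv 1))
        (Fin.forall_fin_two.2 ⟨min_le_left _ _, min_le_right _ _⟩)

end MassEntropy

section JointPMF

variable {𝒳 𝒴 : Type*} {P : 𝒳 → 𝒴 → ℝ}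

namespace IsJointPMF

lemma col_nonneg (hP : IsJointPMF P) (y : 𝒴) : 0 ≤ fun x => P x y :=
  fun x => hP.1 x y

lemma summable_row (hP : IsJointPMF P) (x : 𝒳) : Summable (P x) :=
  hP.2.1.prod_factor x

variable [Fintype 𝒳]

lemma sum_tsum_row (hP : IsJointPMF P) : ∑ x, ∑' y, P x y = 1 := by
  rw [← tsum_fintype (L := .unconditional 𝒳), hP.2.2]

lemma sum_massEntropy_col_le (hP : IsJointPMF P) (u : Finset 𝒴) :
    ∑ y ∈ u, massEntropy (fun x => P x y) ≤ massEntropy fun x => ∑' y, P x y := by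
  refine (sum_massEntropy_le hP.col_nonneg u).trans
    (massEntropy_mono (Finset.sum_nonneg fun y _ => hP.col_nonneg y) fun x => ?_)
  rw [Finset.sum_apply]
  exact (hP.summable_row x).sum_le_tsum u fun y _ => hP.1 x y

lemma summable_massEntropy_col (hP : IsJointPMF P) : Summable fun y => massEntropy fun x => P x y :=
  summable_of_sum_le (fun y => massEntropy_nonneg (hP.col_nonneg y)) hP.sum_massEntropy_col_le

lemma condEntropy_le (hP : IsJointPMF P) : condEntropy P ≤ massEntropy fun x => ∑' y, P x y :=
  Real.tsum_le_of_sum_le (fun y => massEntropy_nonneg (hP.col_nonneg y)) hP.sum_massEntropy_col_le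

lemma summable_mul_logb_posterior (hP : IsJointPMF P) (x : 𝒳) :
    Summable fun y => P x y * Real.logb 2 (P x y / ∑ x', P x' y) := by
  have hterm : ∀ x y, 0 ≤ -(P x y * Real.logb 2 (P x y / ∑ x', P x' y)) := fun x y =>
    neg_mul_logb_div_nonneg (hP.1 x y) (le_sum_of_nonneg (hP.col_nonneg y) x)
  refine summable_neg_iff.1 (hP.summable_massEntropy_col.of_nonneg_of_le (hterm x) fun y => ?_)
  exact Finset.single_le_sum (fun x' _ => hterm x' y) (Finset.mem_univ x)

lemma tsum_mul_logb_div_mul (hP : IsJointPMF P) (x : 𝒳) :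
    ∑' y, P x y * Real.logb 2 (P x y / ((∑' y', P x y') * ∑ x', P x' y)) =
      (∑' y, P x y * Real.logb 2 (P x y / ∑ x', P x' y)) -
        (∑' y, P x y) * Real.logb 2 (∑' y, P x y) := by
  rw [← tsum_mul_right, ← (hP.summable_mul_logb_posterior x).tsum_sub
    ((hP.summable_row x).mul_right _)]
  refine tsum_congr fun y => ?_
  rcases (hP.1 x y).eq_or_lt with h | hpos
  · simp [← h]
  have hrow : 0 < ∑' y', P x y' :=
    hpos.trans_le ((hP.summable_row x).le_tsum y fun y' _ => hP.1 x y')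
  have hcol : 0 < ∑ x', P x' y := hpos.trans_le (le_sum_of_nonneg (hP.col_nonneg y) x)
  rw [mul_comm (∑' y', P x y'), ← div_div,
    Real.logb_div (div_pos hpos hcol).ne' hrow.ne', mul_sub]

lemma condEntropy_eq_neg_sum_tsum (hP : IsJointPMF P) :
    condEntropy P = -∑ x, ∑' y, P x y * Real.logb 2 (P x y / ∑ x', P x' y) := by
  simp only [condEntropy, massEntropy, Finset.sum_neg_distrib]
  rw [tsum_neg, Summable.tsum_finsetSum fun x _ => hP.summable_mul_logb_posterior x]

lemma miBits_eq_massEntropy_sub_condEntropy (hP : IsJointPMF P) :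
    miBits P = (massEntropy fun x => ∑' y, P x y) - condEntropy P := by
  rw [hP.condEntropy_eq_neg_sum_tsum, massEntropy_eq_of_sum_eq_one hP.sum_tsum_row]
  simp only [miBits, tsum_fintype (L := .unconditional 𝒳), hP.tsum_mul_logb_div_mul,
    Finset.sum_sub_distrib, Finset.sum_neg_distrib]
  ring

lemma miBits_nonneg {𝒳 : Type*} [Finite 𝒳] {P : 𝒳 → 𝒴 → ℝ} (hP : IsJointPMF P) :
    0 ≤ miBits P := by
  cases nonempty_fintype 𝒳
  rw [hP.miBits_eq_massEntropy_sub_condEntropy, sub_nonneg]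
  exact hP.condEntropy_le

lemma miBits_eq_hBin_sub_condEntropy {P : Fin 2 → 𝒴 → ℝ} (hP : IsJointPMF P) :
    miBits P = hBin (∑' y, P 0 y) - condEntropy P := by
  rw [hP.miBits_eq_massEntropy_sub_condEntropy, massEntropy_eq_hBin hP.sum_tsum_row]

/-- `H(X|X') = H(X - X'|X') ≤ H(X - X')`. -/
lemma condEntropy_le_massEntropy_diff [AddGroup 𝒳] {q : 𝒳 → 𝒳 → ℝ} (hq : IsJointPMF q) :
    condEntropy q ≤ massEntropy fun k => ∑ m, q (k + m) m := by
  calc condEntropy q = ∑ m, massEntropy fun k => q (k + m) m := by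
        rw [condEntropy, tsum_fintype]
        exact Finset.sum_congr rfl fun m _ =>
          (massEntropy_comp_equiv (fun x => q x m) (Equiv.addRight m)).symm
    _ ≤ massEntropy (∑ m, fun k => q (k + m) m) :=
        sum_massEntropy_le (fun m k => hq.1 (k + m) m) Finset.univ
    _ = massEntropy fun k => ∑ m, q (k + m) m := by
        congr 1
        exact Finset.sum_fn _ _

lemma condEntropy_le_hBin_error {q : Fin 2 → Fin 2 → ℝ} (hq : IsJointPMF q) :
    condEntropy q ≤ hBin (q 1 0 + q 0 1) := by
  have htotal : ∑ k, ∑ m, q (k + m) m = 1 := by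
    rw [← hq.sum_tsum_row]
    simp only [tsum_fintype]
    rw [Finset.sum_comm, Finset.sum_comm (f := q)]
    exact Finset.sum_congr rfl fun m _ => Equiv.sum_comp (Equiv.addRight m) fun x => q x m
  have hsuccess : ∑ m, q (0 + m) m = 1 - (q 1 0 + q 0 1) := by
    rw [← htotal]
    simp [Fin.sum_univ_two]
  have := hq.condEntropy_le_massEntropy_diff
  rwa [massEntropy_eq_hBin htotal, hsuccess, hBin_one_sub] at this

end IsJointPMF

end JointPMF

section RandomizedQuantizer

variable {𝒳 𝒴 ℳ : Type*} [Fintype ℳ]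

/-- The joint pmf of `(X, M)` when `(X, Y) ~ P` and, given `Y = y`, the output `M` of a randomized
quantizer is drawn from `w y` independently of `X`. -/
noncomputable def kernelJoint (P : 𝒳 → 𝒴 → ℝ) (w : 𝒴 → ℳ → ℝ) : 𝒳 → ℳ → ℝ :=
  fun x m => ∑' y, P x y * w y m

/-- `w` is a maximum a posteriori rule for guessing `X` from `Y`: a Markov kernel putting no mass
on a guess that is strictly less likely than another. How ties are broken is left free. -/
structure IsMAPKernel [Fintype 𝒳] (P : 𝒳 → 𝒴 → ℝ) (w : 𝒴 → 𝒳 → ℝ) : Prop where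
  mem_stdSimplex : ∀ y, w y ∈ stdSimplex ℝ 𝒳
  eq_zero_of_lt : ∀ {x x' y}, P x y < P x' y → w y x = 0

lemma IsJointPMF.summable_mul_kernel {P : 𝒳 → 𝒴 → ℝ} {w : 𝒴 → ℳ → ℝ} (hP : IsJointPMF P)
    (hw : ∀ y, w y ∈ stdSimplex ℝ ℳ) (x : 𝒳) (m : ℳ) : Summable fun y => P x y * w y m :=
  (hP.summable_row x).of_nonneg_of_le (fun y => mul_nonneg (hP.1 x y) ((hw y).1 m))
    fun y => mul_le_of_le_one_right (hP.1 x y) ((hw y).2 ▸ le_sum_of_nonneg (hw y).1 m)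

lemma IsJointPMF.sum_kernelJoint {P : 𝒳 → 𝒴 → ℝ} {w : 𝒴 → ℳ → ℝ} (hP : IsJointPMF P)
    (hw : ∀ y, w y ∈ stdSimplex ℝ ℳ) (x : 𝒳) : ∑ m, kernelJoint P w x m = ∑' y, P x y := by
  simp only [kernelJoint]
  rw [← Summable.tsum_finsetSum fun m _ => hP.summable_mul_kernel hw x m]
  exact tsum_congr fun y => by rw [← Finset.mul_sum, (hw y).2, mul_one]

lemma isJointPMF_kernelJoint {P : 𝒳 → 𝒴 → ℝ} {w : 𝒴 → ℳ → ℝ} (hP : IsJointPMF P)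
    (hw : ∀ y, w y ∈ stdSimplex ℝ ℳ) : IsJointPMF (kernelJoint P w) := by
  have hrow (x : 𝒳) : ∑' m, kernelJoint P w x m = ∑' y, P x y := by
    rw [tsum_fintype, hP.sum_kernelJoint hw]
  have hnonneg (x : 𝒳) (m : ℳ) : 0 ≤ kernelJoint P w x m :=
    tsum_nonneg fun y => mul_nonneg (hP.1 x y) ((hw y).1 m)
  refine ⟨hnonneg, (summable_prod_of_nonneg fun xm => hnonneg xm.1 xm.2).2
    ⟨fun x => (hasSum_fintype _).summable, ?_⟩, ?_⟩
  · simpa only [hrow] using hP.2.1.prod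
  · simpa only [hrow] using hP.2.2

lemma IsJointPMF.hBin_sub_hBin_error_le_miBits {P : Fin 2 → 𝒴 → ℝ} {w : 𝒴 → Fin 2 → ℝ}
    (hP : IsJointPMF P) (hw : ∀ y, w y ∈ stdSimplex ℝ (Fin 2)) :
    hBin (∑' y, P 0 y) - hBin (kernelJoint P w 1 0 + kernelJoint P w 0 1) ≤
      miBits (kernelJoint P w) := by
  have hq := isJointPMF_kernelJoint hP hw
  rw [hq.miBits_eq_hBin_sub_condEntropy, tsum_fintype (β := Fin 2), hP.sum_kernelJoint hw]
  exact sub_le_sub_left hq.condEntropy_le_hBin_error _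

end RandomizedQuantizer

section MAP

variable {𝒴 : Type*} {P : Fin 2 → 𝒴 → ℝ} {w : 𝒴 → Fin 2 → ℝ}

lemma IsMAPKernel.error_le_min (hw : IsMAPKernel P w) (y : 𝒴) :
    P 1 y * w y 0 + P 0 y * w y 1 ≤ min (P 0 y) (P 1 y) := by
  have hsum : w y 0 + w y 1 = 1 := by rw [← Fin.sum_univ_two, (hw.mem_stdSimplex y).2]
  rcases lt_trichotomy (P 0 y) (P 1 y) with h | h | h
  · have h0 := hw.eq_zero_of_lt h
    have h1 : w y 1 = 1 := by linarith
    simp [h0, h1, h.le]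
  · rw [h, ← mul_add, hsum, mul_one, min_self]
  · have h1 := hw.eq_zero_of_lt h
    have h0 : w y 0 = 1 := by linarith
    simp [h0, h1, h.le]

lemma IsMAPKernel.two_mul_error_le_condEntropy (hw : IsMAPKernel P w) (hP : IsJointPMF P) :
    2 * (kernelJoint P w 1 0 + kernelJoint P w 0 1) ≤ condEntropy P := by
  have hsummable := (hP.summable_mul_kernel hw.mem_stdSimplex 1 0).add
    (hP.summable_mul_kernel hw.mem_stdSimplex 0 1)
  calc 2 * (kernelJoint P w 1 0 + kernelJoint P w 0 1)
      = ∑' y, 2 * (P 1 y * w y 0 + P 0 y * w y 1) := by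
        rw [tsum_mul_left, (hP.summable_mul_kernel hw.mem_stdSimplex 1 0).tsum_add
          (hP.summable_mul_kernel hw.mem_stdSimplex 0 1)]
        rfl
    _ ≤ condEntropy P := (hsummable.mul_left 2).tsum_le_tsum
        (fun y => (mul_le_mul_of_nonneg_left (hw.error_le_min y) two_pos.le).trans
          (two_mul_min_le_massEntropy (hP.col_nonneg y))) hP.summable_massEntropy_col

/-- The MAP kernel that breaks ties with a fair coin. -/
noncomputable def fairMAPKernel (P : Fin 2 → 𝒴 → ℝ) (y : 𝒴) (m : Fin 2) : ℝ :=
  if P 0 y / (∑' x, P x y) > 1 / 2 then (if m = 0 then 1 else 0)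
  else if P 0 y / (∑' x, P x y) < 1 / 2 then (if m = 1 then 1 else 0)
  else 1 / 2

lemma fairMAPKernel_mem_stdSimplex (P : Fin 2 → 𝒴 → ℝ) (y : 𝒴) :
    fairMAPKernel P y ∈ stdSimplex ℝ (Fin 2) := by
  refine ⟨fun m => ?_, ?_⟩
  · unfold fairMAPKernel
    split_ifs <;> norm_num
  · rw [Fin.sum_univ_two]
    unfold fairMAPKernel
    simp only [zero_ne_one, one_ne_zero, if_true, if_false]
    split_ifs <;> norm_num

lemma isMAPKernel_fairMAPKernel (h0 : ∀ x y, 0 ≤ P x y) : IsMAPKernel P (fairMAPKernel P) := by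
  have htotal (y : 𝒴) : ∑' x, P x y = P 0 y + P 1 y := by rw [tsum_fintype, Fin.sum_univ_two]
  have hzero {y : 𝒴} (hlt : P 0 y < P 1 y) : fairMAPKernel P y 0 = 0 := by
    have hpost : P 0 y / ∑' x, P x y < 1 / 2 := by
      rw [htotal, div_lt_iff₀ (add_pos_of_nonneg_of_pos (h0 0 y) ((h0 0 y).trans_lt hlt))]
      linarith
    rw [fairMAPKernel, if_neg hpost.not_gt, if_pos hpost, if_neg zero_ne_one]
  have hone {y : 𝒴} (hlt : P 1 y < P 0 y) : fairMAPKernel P y 1 = 0 := by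
    have hpost : 1 / 2 < P 0 y / ∑' x, P x y := by
      rw [htotal, lt_div_iff₀ (add_pos_of_pos_of_nonneg ((h0 1 y).trans_lt hlt) (h0 1 y))]
      linarith
    rw [fairMAPKernel, if_pos hpost, if_neg one_ne_zero]
  refine ⟨fairMAPKernel_mem_stdSimplex P, fun {x x' y} hlt => ?_⟩
  match x, x', hlt with
  | 0, 0, hlt => exact absurd hlt (lt_irrefl _)
  | 0, 1, hlt => exact hzero hlt
  | 1, 0, hlt => exact hone hlt
  | 1, 1, hlt => exact absurd hlt (lt_irrefl _)

end MAP

theorem map_quantizer_bound_general {𝒴 : Type*} {P : Fin 2 → 𝒴 → ℝ}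
    {w : 𝒴 → Fin 2 → ℝ} (hP : IsJointPMF P) (hw : IsMAPKernel P w) {p β : ℝ}
    (hp : (∑' y, P 0 y) = p) (hβ : miBits P = β) :
    hBin p - hBin ((hBin p - β) / 2) ≤ miBits (kernelJoint P w) ∧
    β + 2 / 5 - hBin (1 / 5) ≤ miBits (kernelJoint P w) ∧
    (3 / 5 ≤ β → 1 - hBin ((1 - β) / 2) ≤ miBits (kernelJoint P w)) := by
  set e := kernelJoint P w 1 0 + kernelJoint P w 0 1
  set t := (hBin p - β) / 2 with ht
  have he : 0 ≤ e :=
    have hq := isJointPMF_kernelJoint hP hw.mem_stdSimplex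
    add_nonneg (hq.1 1 0) (hq.1 0 1)
  have het : e ≤ t := by
    have hchain : β = hBin p - condEntropy P := by
      rw [← hβ, ← hp, hP.miBits_eq_hBin_sub_condEntropy]
    have herror : 2 * e ≤ condEntropy P := hw.two_mul_error_le_condEntropy hP
    linarith
  have hβ0 : 0 ≤ β := hβ ▸ hP.miBits_nonneg
  have hp1 : hBin p ≤ 1 := hBin_le_one p
  have hmain : hBin p - hBin t ≤ miBits (kernelJoint P w) := by
    have hfano : hBin p - hBin e ≤ miBits (kernelJoint P w) :=
      hp ▸ hP.hBin_sub_hBin_error_le_miBits hw.mem_stdSimplex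
    have hmono := monotoneOn_hBin ⟨he, by linarith⟩ ⟨he.trans het, by linarith⟩ het
    linarith
  refine ⟨hmain, ?_, fun hβ3 => ?_⟩
  · have hmax : hBin t - 2 * t ≤ hBin (1 / 5) - 2 * (1 / 5) :=
      isMaxOn_hBin_sub_two_mul ⟨he.trans het, by linarith⟩
    linarith
  · have hmono : hBin t - 2 * t ≤ hBin ((1 - β) / 2) - 2 * ((1 - β) / 2) :=
      monotoneOn_hBin_sub_two_mul ⟨he.trans het, by linarith⟩ ⟨by linarith, by linarith⟩
        (by linarith)
    linarith

/-- Performance of the MAP quantizer for binary `X`: `x = 0` encodes the symbol `1` and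
`x = 1` encodes the symbol `2`; ties `Pr(X=1|Y=y) = 1/2` are broken by an independent
fair coin, modeled by the randomized quantization kernel `w`. -/
theorem map_quantizer_bound {𝒴 : Type*} [Countable 𝒴] (P : Fin 2 → 𝒴 → ℝ)
    (hP : IsJointPMF P) (p β : ℝ) (hp : (∑' y, P 0 y) = p) (hβ : miBits P = β) :
    let w : 𝒴 → Fin 2 → ℝ := fun y m =>
      if P 0 y / (∑' x, P x y) > 1 / 2 then (if m = 0 then 1 else 0)
      else if P 0 y / (∑' x, P x y) < 1 / 2 then (if m = 1 then 1 else 0)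
      else 1 / 2
    let q : Fin 2 → Fin 2 → ℝ := fun x m => ∑' y, P x y * w y m
    hBin p - hBin ((hBin p - β) / 2) ≤ miBits q ∧
    (β < 3 / 5 → β + 2 / 5 - hBin (1 / 5) ≤ miBits q) ∧
    (3 / 5 ≤ β → 1 - hBin ((1 - β) / 2) ≤ miBits q) := by
  intro w q
  obtain ⟨hmain, hsmall, hlarge⟩ :=
    map_quantizer_bound_general hP (isMAPKernel_fairMAPKernel hP.1) hp hβ
  exact ⟨hmain, fun _ => hsmall, hlarge⟩
end

section
/- Let 0 ≤ β ≤ 1, let X ~ Bernoulli(1/2) on {0,1}, and let Y be the output of a binary erasure channel with input X: Y = X with probability β and Y = '?' with probability 1-β, independently of X. Then I(X;Y) = β; the MAP quantizer f_MAP satisfies I(X; f_MAP(Y)) = 1 - h((1-β)/2); the asymmetric quantizer f_Z defined by f_Z(y) = 1 if y ∈ {1, ?} and f_Z(y) = 2 if y = 0 achieves I(X;[Y]_2) = I(X; f_Z(Y)) = (β/2)·h((1-β)/(2-β)) + 1 - h((1-β)/(2-β)); and in particular I(X;[Y]_2) ≥ β/2. -/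
/-!
For a uniform binary input, `I(X;Y) = 1 - H(X|Y)`, and `H(X|Y)` is a sum over the outputs of
`P(Y = y) h(P(X = 0 | Y = y))`. An output compatible with only one input contributes nothing, and
one on which the two inputs are equally likely contributes its whole mass.

A quantizer that merges `0` and `1` has an output independent of `X`. One with two levels that
separates them must merge `?` with exactly one of them, and that merged cell carries all the
conditional entropy; by the symmetry of the channel it does not matter which one, so every
separating quantizer attains the same value as `f_Z`.
-/

open scoped BigOperators

lemma hBin_zero : hBin 0 = 0 := by simp [hBin]

lemma hBin_one : hBin 1 = 0 := by simp [hBin]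

lemma hBin_one_half : hBin (1 / 2) = 1 := by
  rw [hBin_eq_binEntropy_div_log_two, one_div, Real.binEntropy_two_inv,
    div_self (Real.log_pos one_lt_two).ne']

lemma le_mul_hBin_add_one_sub_hBin {a : ℝ} (ha : a ≤ 1) (t : ℝ) :
    a ≤ a * hBin t + 1 - hBin t := by
  linarith [mul_nonneg (sub_nonneg.2 ha) (sub_nonneg.2 (hBin_le_one t))]

lemma mul_logb_two_div_mul {a r c : ℝ} (hr : r = 0 → a = 0) (hc : c = 0 → a = 0) :
    a * Real.logb 2 (a / (r * c)) =
      (a * -Real.log r + a * -Real.log c - Real.negMulLog a) / Real.log 2 := by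
  rcases eq_or_ne a 0 with rfl | ha
  · simp
  · have hr' : r ≠ 0 := fun h => ha (hr h)
    have hc' : c ≠ 0 := fun h => ha (hc h)
    rw [Real.logb, Real.log_div ha (mul_ne_zero hr' hc'), Real.log_mul hr' hc', Real.negMulLog]
    ring

theorem miBits_eq_entropy_add_entropy_sub_jointEntropy {𝒳 𝒴 : Type*} [Fintype 𝒳] [Fintype 𝒴]
    {q : 𝒳 → 𝒴 → ℝ} (hq : ∀ x y, 0 ≤ q x y) :
    miBits q = (∑ x, Real.negMulLog (∑ y, q x y) + ∑ y, Real.negMulLog (∑ x, q x y)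
      - ∑ x, ∑ y, Real.negMulLog (q x y)) / Real.log 2 := by
  have row_zero (x y) (h : ∑ y', q x y' = 0) : q x y = 0 :=
    (Finset.sum_eq_zero_iff_of_nonneg fun y' _ => hq x y').1 h y (Finset.mem_univ y)
  have col_zero (x y) (h : ∑ x', q x' y = 0) : q x y = 0 :=
    (Finset.sum_eq_zero_iff_of_nonneg fun x' _ => hq x' y).1 h x (Finset.mem_univ x)
  have row_entropy (x) : ∑ y, q x y * -Real.log (∑ y', q x y') =
      Real.negMulLog (∑ y, q x y) := by
    rw [← Finset.sum_mul, Real.negMulLog]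
    ring
  have col_entropy : ∑ x, ∑ y, q x y * -Real.log (∑ x', q x' y) =
      ∑ y, Real.negMulLog (∑ x, q x y) := by
    rw [Finset.sum_comm]
    refine Finset.sum_congr rfl fun y _ => ?_
    rw [← Finset.sum_mul, Real.negMulLog]
    ring
  simp only [miBits, tsum_fintype, mul_logb_two_div_mul (row_zero _ _) (col_zero _ _),
    ← Finset.sum_div, Finset.sum_sub_distrib, Finset.sum_add_distrib, row_entropy, col_entropy]

/-- The contribution `P(Y = y) * H(X | Y = y)` of a single output `y` to the conditional entropy of
a binary input, as a function of the joint masses `a = P(X = 0, Y = y)` and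
`b = P(X = 1, Y = y)`. An output of mass zero contributes `0` whatever the junk value of
`a / (a + b)`. -/
noncomputable def cellEntropy (a b : ℝ) : ℝ :=
  (a + b) * hBin (a / (a + b))

lemma cellEntropy_zero_right (a : ℝ) : cellEntropy a 0 = 0 := by
  rcases eq_or_ne a 0 with rfl | ha
  · simp [cellEntropy]
  · simp [cellEntropy, div_self ha, hBin_one]

lemma cellEntropy_zero_left (b : ℝ) : cellEntropy 0 b = 0 := by
  simp [cellEntropy, hBin_zero]

lemma cellEntropy_self (a : ℝ) : cellEntropy a a = a + a := by
  rcases eq_or_ne a 0 with rfl | ha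
  · simp [cellEntropy]
  · have posterior : a / (a + a) = 1 / 2 := by field_simp; norm_num
    rw [cellEntropy, posterior, hBin_one_half, mul_one]

lemma cellEntropy_comm (a b : ℝ) : cellEntropy a b = cellEntropy b a := by
  rcases eq_or_ne (a + b) 0 with h | h
  · simp [cellEntropy, h, add_comm b a]
  · have posterior : b / (a + b) = 1 - a / (a + b) := by field_simp; ring
    rw [cellEntropy, cellEntropy, add_comm b a, posterior, hBin_one_sub]

lemma cellEntropy_eq_negMulLog {a b : ℝ} (ha : 0 ≤ a) (hb : 0 ≤ b) :
    cellEntropy a b =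
      (Real.negMulLog a + Real.negMulLog b - Real.negMulLog (a + b)) / Real.log 2 := by
  rcases (add_nonneg ha hb).eq_or_lt' with h | h
  · obtain ⟨rfl, rfl⟩ := (add_eq_zero_iff_of_nonneg ha hb).1 h
    simp [cellEntropy]
  · set s := a + b
    set t := a / s with ht
    have a_eq : a = s * t := by rw [ht]; field_simp
    have b_eq : b = s * (1 - t) := by linear_combination -a_eq
    rw [cellEntropy, ← ht, hBin_eq_binEntropy_div_log_two,
      Real.binEntropy_eq_negMulLog_add_negMulLog_one_sub, a_eq, b_eq, Real.negMulLog_mul,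
      Real.negMulLog_mul]
    ring

section BinaryInput

variable {𝒴 : Type*} [Fintype 𝒴] {q : Fin 2 → 𝒴 → ℝ}

theorem miBits_eq_hBin_sub_sum_cellEntropy (hq : ∀ x y, 0 ≤ q x y)
    (hsum : ∑ x, ∑ y, q x y = 1) :
    miBits q = hBin (∑ y, q 0 y) - ∑ y, cellEntropy (q 0 y) (q 1 y) := by
  have hX : ∑ y, q 1 y = 1 - ∑ y, q 0 y := by
    rw [← hsum, Fin.sum_univ_two]
    ring
  simp only [miBits_eq_entropy_add_entropy_sub_jointEntropy hq, hBin_eq_binEntropy_div_log_two,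
    Real.binEntropy_eq_negMulLog_add_negMulLog_one_sub, cellEntropy_eq_negMulLog (hq _ _) (hq _ _),
    Fin.sum_univ_two, hX, ← Finset.sum_div, Finset.sum_sub_distrib, Finset.sum_add_distrib]
  ring

theorem miBits_eq_one_sub_sum_cellEntropy (hq : ∀ x y, 0 ≤ q x y)
    (huniform : ∀ x, ∑ y, q x y = 1 / 2) :
    miBits q = 1 - ∑ y, cellEntropy (q 0 y) (q 1 y) := by
  have hsum : ∑ x, ∑ y, q x y = 1 := by
    simp only [huniform, Fin.sum_univ_two]
    norm_num
  rw [miBits_eq_hBin_sub_sum_cellEntropy hq hsum, huniform, hBin_one_half]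

end BinaryInput

section Quantizer

variable {𝒳 𝒴 : Type*} {p : 𝒳 → 𝒴 → ℝ} {M : ℕ}

lemma quantJoint_nonneg (hp : ∀ x y, 0 ≤ p x y) (f : 𝒴 → Fin M) (x : 𝒳) (m : Fin M) :
    0 ≤ quantJoint p f x m :=
  tsum_nonneg fun y => by split_ifs <;> simp [hp]

lemma sum_quantJoint [Fintype 𝒴] (p : 𝒳 → 𝒴 → ℝ) (f : 𝒴 → Fin M) (x : 𝒳) :
    ∑ m, quantJoint p f x m = ∑ y, p x y := by
  simp only [quantJoint, tsum_fintype]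
  rw [Finset.sum_comm]
  simp only [Finset.sum_ite_eq, Finset.mem_univ, if_true]

lemma quantMI_eq_of_forall_le {f : 𝒴 → Fin M}
    (hf : ∀ g : 𝒴 → Fin M, miBits (quantJoint p g) ≤ miBits (quantJoint p f)) :
    quantMI p M = miBits (quantJoint p f) :=
  IsGreatest.csSup_eq ⟨Set.mem_range_self f, Set.forall_mem_range.2 hf⟩

end Quantizer

/-- The MAP estimator of a binary input, with fair tie-breaking, as a Markov kernel from outputs to
estimates. At an output of mass zero the posterior is the junk value `0 / 0 = 0`, so the estimate
is `1`. -/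
noncomputable def mapKernel {𝒴 : Type*} (p : Fin 2 → 𝒴 → ℝ) (y : 𝒴) (m : Fin 2) : ℝ :=
  if p 0 y / (∑' x, p x y) > 1 / 2 then (if m = 0 then 1 else 0)
  else if p 0 y / (∑' x, p x y) < 1 / 2 then (if m = 1 then 1 else 0)
  else 1 / 2

section MAP

variable {𝒴 : Type*} {p : Fin 2 → 𝒴 → ℝ} {y : 𝒴}

lemma mapKernel_of_left_eq_zero (h : p 0 y = 0) (m : Fin 2) :
    mapKernel p y m = if m = 1 then 1 else 0 := by
  norm_num [mapKernel, h]

lemma mapKernel_of_right_eq_zero (h0 : p 0 y ≠ 0) (h1 : p 1 y = 0) (m : Fin 2) :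
    mapKernel p y m = if m = 0 then 1 else 0 := by
  norm_num [mapKernel, tsum_fintype, Fin.sum_univ_two, h1, div_self h0]

lemma mapKernel_of_eq (h0 : p 0 y ≠ 0) (h : p 1 y = p 0 y) (m : Fin 2) :
    mapKernel p y m = 1 / 2 := by
  have posterior : p 0 y / (p 0 y + p 0 y) = 1 / 2 := by field_simp; norm_num
  simp only [mapKernel, tsum_fintype, Fin.sum_univ_two, h, posterior, gt_iff_lt, lt_irrefl,
    if_false]

end MAP

/-- The joint law of a uniform bit and its image under the binary symmetric channel with crossover
probability `ε`. -/
noncomputable def bscLaw (ε : ℝ) (x y : Fin 2) : ℝ :=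
  1 / 2 * if y = x then 1 - ε else ε

theorem miBits_bscLaw {ε : ℝ} (h0 : 0 ≤ ε) (h1 : ε ≤ 1) : miBits (bscLaw ε) = 1 - hBin ε := by
  have hnonneg (x y) : 0 ≤ bscLaw ε x y := by
    unfold bscLaw
    split_ifs <;> linarith
  have huniform (x) : ∑ y, bscLaw ε x y = 1 / 2 := by
    simp only [bscLaw, Fin.sum_univ_two]
    split_ifs <;> first | omega | ring
  have cell_zero : cellEntropy (bscLaw ε 0 0) (bscLaw ε 1 0) = 1 / 2 * hBin ε := by
    norm_num [cellEntropy, bscLaw, ← mul_add, hBin_one_sub]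
  have cell_one : cellEntropy (bscLaw ε 0 1) (bscLaw ε 1 1) = 1 / 2 * hBin ε := by
    norm_num [cellEntropy, bscLaw, ← mul_add]
  rw [miBits_eq_one_sub_sum_cellEntropy hnonneg huniform, Fin.sum_univ_two, cell_zero, cell_one]
  ring

/-- The joint law of a uniform bit and its image under the binary erasure channel with erasure
probability `1 - β`; the output `2` is the erasure symbol. -/
noncomputable def becLaw (β : ℝ) (x : Fin 2) (y : Fin 3) : ℝ :=
  (1 / 2) * (if (y : ℕ) = (x : ℕ) then β else if (y : ℕ) = 2 then 1 - β else 0)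

section BEC

variable {β : ℝ}

lemma becLaw_nonneg (h0 : 0 ≤ β) (h1 : β ≤ 1) (x : Fin 2) (y : Fin 3) : 0 ≤ becLaw β x y := by
  unfold becLaw
  split_ifs <;> linarith

lemma becLaw_zero (β : ℝ) (x : Fin 2) : becLaw β x 0 = if x = 0 then β / 2 else 0 := by
  fin_cases x <;> simp [becLaw, div_eq_inv_mul]

lemma becLaw_one (β : ℝ) (x : Fin 2) : becLaw β x 1 = if x = 1 then β / 2 else 0 := by
  fin_cases x <;> simp [becLaw, div_eq_inv_mul]

lemma becLaw_erasure (β : ℝ) (x : Fin 2) : becLaw β x 2 = (1 - β) / 2 := by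
  fin_cases x <;> simp [becLaw, div_eq_inv_mul]

lemma sum_becLaw (β : ℝ) (x : Fin 2) : ∑ y, becLaw β x y = 1 / 2 := by
  rw [Fin.sum_univ_three, becLaw_zero, becLaw_one, becLaw_erasure]
  split_ifs <;> first | omega | ring

theorem miBits_becLaw (h0 : 0 ≤ β) (h1 : β ≤ 1) : miBits (becLaw β) = β := by
  rw [miBits_eq_one_sub_sum_cellEntropy (becLaw_nonneg h0 h1) (sum_becLaw β)]
  simp only [Fin.sum_univ_three, becLaw_zero, becLaw_one, becLaw_erasure, if_true, zero_ne_one,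
    one_ne_zero, if_false, cellEntropy_zero_right, cellEntropy_zero_left, cellEntropy_self]
  ring

theorem becLaw_comp_mapKernel (β : ℝ) :
    (fun x m => ∑' y, becLaw β x y * mapKernel (becLaw β) y m) = bscLaw ((1 - β) / 2) := by
  have estimate_zero (x m) : becLaw β x 0 * mapKernel (becLaw β) 0 m =
      becLaw β x 0 * if m = 0 then 1 else 0 := by
    rcases eq_or_ne β 0 with rfl | hβ
    · simp [becLaw_zero]
    · rw [mapKernel_of_right_eq_zero (by simp [becLaw_zero, hβ]) (by simp [becLaw_zero])]
  have estimate_one (m) : mapKernel (becLaw β) 1 m = if m = 1 then 1 else 0 :=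
    mapKernel_of_left_eq_zero (by simp [becLaw_one]) m
  have estimate_erasure (x m) : becLaw β x 2 * mapKernel (becLaw β) 2 m =
      becLaw β x 2 * (1 / 2) := by
    rcases eq_or_ne (1 - β) 0 with hβ | hβ
    · simp [becLaw_erasure, hβ]
    · rw [mapKernel_of_eq (by simp [becLaw_erasure, hβ]) (by simp [becLaw_erasure])]
  funext x m
  rw [tsum_fintype, Fin.sum_univ_three, estimate_zero, estimate_one, estimate_erasure, becLaw_zero,
    becLaw_one, becLaw_erasure]
  unfold bscLaw
  split_ifs <;> first | omega | ring

variable {M : ℕ} {f : Fin 3 → Fin M}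

lemma quantJoint_becLaw (β : ℝ) (f : Fin 3 → Fin M) (x : Fin 2) (m : Fin M) :
    quantJoint (becLaw β) f x m =
      (if f x.castSucc = m then β / 2 else 0) + if f 2 = m then (1 - β) / 2 else 0 := by
  fin_cases x <;>
    simp [quantJoint, Fin.sum_univ_three, becLaw_zero, becLaw_one, becLaw_erasure]

lemma miBits_quantJoint_becLaw (h0 : 0 ≤ β) (h1 : β ≤ 1) (f : Fin 3 → Fin M) :
    miBits (quantJoint (becLaw β) f) =
      1 - ∑ m, cellEntropy (quantJoint (becLaw β) f 0 m) (quantJoint (becLaw β) f 1 m) :=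
  miBits_eq_one_sub_sum_cellEntropy (quantJoint_nonneg (becLaw_nonneg h0 h1) f)
    fun x => (sum_quantJoint _ f x).trans (sum_becLaw β x)

theorem miBits_quantJoint_becLaw_of_merge (h0 : 0 ≤ β) (h1 : β ≤ 1) (hf : f 0 = f 1) :
    miBits (quantJoint (becLaw β) f) = 0 := by
  have rows_eq (m) : quantJoint (becLaw β) f 1 m = quantJoint (becLaw β) f 0 m := by
    simp [quantJoint_becLaw, hf]
  rw [miBits_quantJoint_becLaw h0 h1]
  simp only [rows_eq, cellEntropy_self, Finset.sum_add_distrib, sum_quantJoint, sum_becLaw]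
  norm_num

lemma cellEntropy_erasure_cell (β : ℝ) :
    cellEntropy ((1 - β) / 2) (1 / 2) = (1 - β / 2) * hBin ((1 - β) / (2 - β)) := by
  have mass : (1 - β) / 2 + 1 / 2 = 1 - β / 2 := by ring
  have posterior : (1 - β) / 2 / (1 - β / 2) = (1 - β) / (2 - β) := by
    rw [div_div]
    ring_nf
  rw [cellEntropy, mass, posterior]

theorem miBits_quantJoint_becLaw_of_separate (h0 : 0 ≤ β) (h1 : β ≤ 1) (hf : f 0 ≠ f 1)
    (herasure : f 2 = f 0 ∨ f 2 = f 1) :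
    miBits (quantJoint (becLaw β) f) =
      β / 2 * hBin ((1 - β) / (2 - β)) + 1 - hBin ((1 - β) / (2 - β)) := by
  have pure_cell (m) (hm : m ≠ f 2) :
      cellEntropy (quantJoint (becLaw β) f 0 m) (quantJoint (becLaw β) f 1 m) = 0 := by
    by_cases h : f 0 = m
    · have : f 1 ≠ m := fun h' => hf (h.trans h'.symm)
      simp [quantJoint_becLaw, this, hm.symm, cellEntropy_zero_right]
    · simp [quantJoint_becLaw, h, hm.symm, cellEntropy_zero_left]
  have half : β / 2 + (1 - β) / 2 = 1 / 2 := by ring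
  have mixed_cell :
      cellEntropy (quantJoint (becLaw β) f 0 (f 2)) (quantJoint (becLaw β) f 1 (f 2)) =
        (1 - β / 2) * hBin ((1 - β) / (2 - β)) := by
    rcases herasure with h | h
    · rw [← cellEntropy_erasure_cell β, cellEntropy_comm]
      simp [quantJoint_becLaw, h, hf.symm, half]
    · rw [← cellEntropy_erasure_cell β]
      simp [quantJoint_becLaw, h, hf, half]
  rw [miBits_quantJoint_becLaw h0 h1,
    Finset.sum_eq_single (f 2) (fun m _ hm => pure_cell m hm) (by simp), mixed_cell]
  ring

theorem quantMI_becLaw_two (h0 : 0 ≤ β) (h1 : β ≤ 1) {f : Fin 3 → Fin 2} (hf : f 0 ≠ f 1) :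
    quantMI (becLaw β) 2 = miBits (quantJoint (becLaw β) f) := by
  have erasure_mem {g : Fin 3 → Fin 2} (hg : g 0 ≠ g 1) : g 2 = g 0 ∨ g 2 = g 1 := by omega
  refine quantMI_eq_of_forall_le fun g => ?_
  rw [miBits_quantJoint_becLaw_of_separate h0 h1 hf (erasure_mem hf)]
  by_cases hg : g 0 = g 1
  · rw [miBits_quantJoint_becLaw_of_merge h0 h1 hg]
    linarith [le_mul_hBin_add_one_sub_hBin (show β / 2 ≤ 1 by linarith) ((1 - β) / (2 - β))]
  · rw [miBits_quantJoint_becLaw_of_separate h0 h1 hg (erasure_mem hg)]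

end BEC

/-- The binary erasure channel example: `X ~ Bernoulli(1/2)` on `{0,1}`, `𝒴 = Fin 3`
with `y = 2` playing the role of the erasure symbol `?`. The MAP quantizer (with fair
coin tie-breaking, modeled by the kernel `w`) retains only `1 - h((1-β)/2)`, while the
asymmetric quantizer `f_Z` is optimal among 2-level quantizers and retains
`(β/2) h((1-β)/(2-β)) + 1 - h((1-β)/(2-β)) ≥ β/2`. -/
theorem bec_quantization (β : ℝ) (hβ0 : 0 ≤ β) (hβ1 : β ≤ 1) :
    let p : Fin 2 → Fin 3 → ℝ := fun x y =>
      (1 / 2) * (if (y : ℕ) = (x : ℕ) then β else if (y : ℕ) = 2 then 1 - β else 0)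
    let w : Fin 3 → Fin 2 → ℝ := fun y m =>
      if p 0 y / (∑' x, p x y) > 1 / 2 then (if m = 0 then 1 else 0)
      else if p 0 y / (∑' x, p x y) < 1 / 2 then (if m = 1 then 1 else 0)
      else 1 / 2
    let fZ : Fin 3 → Fin 2 := fun y => if y = 0 then 1 else 0
    miBits p = β ∧
    miBits (fun x m => ∑' y, p x y * w y m) = 1 - hBin ((1 - β) / 2) ∧
    quantMI p 2 = miBits (quantJoint p fZ) ∧
    miBits (quantJoint p fZ) =
      β / 2 * hBin ((1 - β) / (2 - β)) + 1 - hBin ((1 - β) / (2 - β)) ∧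
    β / 2 ≤ quantMI p 2 := by
  intro p w fZ
  have hfZ : fZ 0 ≠ fZ 1 := by decide
  have hmax : quantMI p 2 = miBits (quantJoint p fZ) := quantMI_becLaw_two hβ0 hβ1 hfZ
  have hvalue : miBits (quantJoint p fZ) =
      β / 2 * hBin ((1 - β) / (2 - β)) + 1 - hBin ((1 - β) / (2 - β)) :=
    miBits_quantJoint_becLaw_of_separate hβ0 hβ1 hfZ (.inr rfl)
  have hmap : miBits (fun x m => ∑' y, p x y * w y m) = 1 - hBin ((1 - β) / 2) :=
    (congrArg miBits (becLaw_comp_mapKernel β)).trans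
      (miBits_bscLaw (by linarith) (by linarith))
  refine ⟨miBits_becLaw hβ0 hβ1, hmap, hmax, hvalue, ?_⟩
  rw [hmax, hvalue]
  exact le_mul_hBin_add_one_sub_hBin (by linarith) _
end

section
/- The map P_X ↦ I(X;[Y]_M) is in general not concave in P_X for a fixed channel P_{Y|X}. Specifically, let 𝒳 = 𝒴 = {1,2,3}, let Y = X (the noiseless channel), let P_{X₁} = (1/2, 1/4, 1/4) and P_{X₂} = (1/4, 1/4, 1/2). Then I(X₁;[Y]_2) = 1 and I(X₂;[Y]_2) = 1, but for every α ∈ (0,1), the mixture P_X = α·P_{X₁} + (1-α)·P_{X₂} = ((1+α)/4, 1/4, (2-α)/4) satisfies I(X;[Y]_2) < 1. -/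
/-!
If `Y` is a function of `X`, then so is `f(Y)`, whence `I(X; f(Y)) = H(f(Y))`. For a two-level
quantizer `f` this is the binary entropy of the probability of `{f(Y) = 0}`: at most one bit, with
equality exactly when that probability is `1/2`. The supremum over the finitely many quantizers is
attained, so for a noiseless channel `I(X;[Y]_2) = 1` if and only if some event has probability
exactly `1/2`. On at most three symbols, an event or its complement contains at most one symbol, so
this means that some atom has mass `1/2`. Each endpoint has such an atom, whereas a strict mixture
has none.
-/

open scoped BigOperators

section FiberMass

variable {𝒳 𝒴 : Type*} [Fintype 𝒳] [DecidableEq 𝒴]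

/-- The law of `f(X)` when `X` has law `q`: the mass that `q` gives to the fiber of `f` over `y`. -/
def fiberMass (q : 𝒳 → ℝ) (f : 𝒳 → 𝒴) (y : 𝒴) : ℝ :=
  ∑ x with f x = y, q x

lemma sum_fiberMass [Fintype 𝒴] (q : 𝒳 → ℝ) (f : 𝒳 → 𝒴) : ∑ y, fiberMass q f y = ∑ x, q x :=
  Finset.sum_fiberwise _ _ _

lemma exists_fiberMass_zero_eq_iff (q : 𝒳 → ℝ) (c : ℝ) :
    (∃ f : 𝒳 → Fin 2, fiberMass q f 0 = c) ↔ ∃ s : Finset 𝒳, ∑ x ∈ s, q x = c := by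
  classical
  constructor
  · rintro ⟨f, hf⟩
    exact ⟨({x | f x = 0} : Finset 𝒳), hf⟩
  · rintro ⟨s, hs⟩
    exact ⟨fun x => if x ∈ s then 0 else 1, by simpa [fiberMass] using hs⟩

end FiberMass

lemma exists_sum_eq_half_iff_of_card_le_three {ι : Type*} [Fintype ι] {q : ι → ℝ}
    (hcard : Fintype.card ι ≤ 3) (hsum : ∑ x, q x = 1) :
    (∃ s : Finset ι, ∑ x ∈ s, q x = 2⁻¹) ↔ ∃ x, q x = 2⁻¹ := by
  classical
  refine ⟨?_, fun ⟨x, hx⟩ => ⟨{x}, by simpa using hx⟩⟩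
  have of_card_le_one (t : Finset ι) (ht : t.card ≤ 1) (hq : ∑ x ∈ t, q x = 2⁻¹) :
      ∃ x, q x = 2⁻¹ := by
    have hne : t.Nonempty := Finset.nonempty_of_sum_ne_zero (f := q) (by simp [hq])
    obtain ⟨x, rfl⟩ := Finset.card_eq_one.mp (ht.antisymm hne.card_pos)
    exact ⟨x, by simpa using hq⟩
  rintro ⟨s, hs⟩
  have hs_compl : ∑ x ∈ sᶜ, q x = 2⁻¹ := by linarith [Finset.sum_add_sum_compl s q]
  have hcard_add := s.card_add_card_compl
  obtain h | h : s.card ≤ 1 ∨ sᶜ.card ≤ 1 := by omega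
  · exact of_card_le_one s h hs
  · exact of_card_le_one sᶜ h hs_compl

section DetJoint

variable {𝒳 𝒴 : Type*} [DecidableEq 𝒴]

/-- Joint law of `(X, g(X))` when `X` has law `q`. The noiseless channel is `detJoint q id`. -/
def detJoint (q : 𝒳 → ℝ) (g : 𝒳 → 𝒴) : 𝒳 → 𝒴 → ℝ :=
  fun x y => if g x = y then q x else 0

lemma quantJoint_detJoint (q : 𝒳 → ℝ) (g : 𝒳 → 𝒴) {M : ℕ} (f : 𝒴 → Fin M) :
    quantJoint (detJoint q g) f = detJoint q (f ∘ g) := by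
  funext x m
  rw [quantJoint, tsum_eq_single (g x) fun y hy => by simp [detJoint, hy.symm]]
  simp [detJoint]

variable [Fintype 𝒳]

lemma miBits_detJoint [Fintype 𝒴] (q : 𝒳 → ℝ) (g : 𝒳 → 𝒴) :
    miBits (detJoint q g) = (∑ y, Real.negMulLog (fiberMass q g y)) / Real.log 2 := by
  have marginal_fst (x : 𝒳) : ∑ y, detJoint q g x y = q x := by simp [detJoint]
  have marginal_snd (y : 𝒴) : ∑ x, detJoint q g x y = fiberMass q g y :=
    (Finset.sum_filter _ _).symm
  have cancel_mass (x : 𝒳) (y : 𝒴) (c : ℝ) :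
      detJoint q g x y * Real.logb 2 (detJoint q g x y / (q x * c)) =
        detJoint q g x y * Real.logb 2 c⁻¹ := by
    by_cases hy : g x = y
    · obtain hx | hx := eq_or_ne (q x) 0
      · simp [detJoint, hx]
      · simp [detJoint, hy, div_mul_cancel_left₀ hx]
    · simp [detJoint, hy]
  simp only [miBits, tsum_fintype, marginal_fst, marginal_snd, cancel_mass]
  rw [Finset.sum_comm, Finset.sum_div]
  refine Finset.sum_congr rfl fun y _ => ?_
  rw [← Finset.sum_mul, marginal_snd, Real.logb, Real.log_inv, Real.negMulLog]
  ring

lemma miBits_detJoint_fin_two {q : 𝒳 → ℝ} (hsum : ∑ x, q x = 1) (f : 𝒳 → Fin 2) :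
    miBits (detJoint q f) = Real.binEntropy (fiberMass q f 0) / Real.log 2 := by
  have hone : fiberMass q f 1 = 1 - fiberMass q f 0 := by
    rw [← hsum, ← sum_fiberMass q f, Fin.sum_univ_two, add_sub_cancel_left]
  rw [miBits_detJoint, Fin.sum_univ_two, hone,
    Real.binEntropy_eq_negMulLog_add_negMulLog_one_sub]

lemma miBits_detJoint_fin_two_le_one {q : 𝒳 → ℝ} (hsum : ∑ x, q x = 1) (f : 𝒳 → Fin 2) :
    miBits (detJoint q f) ≤ 1 := by
  rw [miBits_detJoint_fin_two hsum, div_le_one (Real.log_pos one_lt_two)]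
  exact Real.binEntropy_le_log_two

lemma miBits_detJoint_fin_two_eq_one_iff {q : 𝒳 → ℝ} (hsum : ∑ x, q x = 1) (f : 𝒳 → Fin 2) :
    miBits (detJoint q f) = 1 ↔ fiberMass q f 0 = 2⁻¹ := by
  rw [miBits_detJoint_fin_two hsum, div_eq_one_iff_eq (Real.log_pos one_lt_two).ne',
    Real.binEntropy_eq_log_two]

lemma quantMI_detJoint_two_le_one {q : 𝒳 → ℝ} (hsum : ∑ x, q x = 1) (g : 𝒳 → 𝒴) :
    quantMI (detJoint q g) 2 ≤ 1 :=
  ciSup_le fun f => by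
    rw [quantJoint_detJoint]
    exact miBits_detJoint_fin_two_le_one hsum (f ∘ g)

lemma quantMI_detJoint_two_eq_one_iff [Finite 𝒴] {q : 𝒳 → ℝ} (hsum : ∑ x, q x = 1)
    (g : 𝒳 → 𝒴) :
    quantMI (detJoint q g) 2 = 1 ↔ ∃ f : 𝒴 → Fin 2, fiberMass q (f ∘ g) 0 = 2⁻¹ := by
  simp only [← miBits_detJoint_fin_two_eq_one_iff hsum, ← quantJoint_detJoint]
  constructor
  · intro h
    obtain ⟨f, hf⟩ :=
      exists_eq_ciSup_of_finite (f := fun f : 𝒴 → Fin 2 => miBits (quantJoint (detJoint q g) f))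
    exact ⟨f, hf.trans h⟩
  · rintro ⟨f, hf⟩
    exact (quantMI_detJoint_two_le_one hsum g).antisymm
      (le_ciSup_of_le (Set.finite_range _).bddAbove f hf.ge)

end DetJoint

lemma quantMI_detJoint_id_two_eq_one_iff_of_card_le_three {𝒳 : Type*} [Fintype 𝒳] [DecidableEq 𝒳]
    {q : 𝒳 → ℝ} (hcard : Fintype.card 𝒳 ≤ 3) (hsum : ∑ x, q x = 1) :
    quantMI (detJoint q id) 2 = 1 ↔ ∃ x, q x = 2⁻¹ := by
  simp only [quantMI_detJoint_two_eq_one_iff hsum, Function.comp_id, exists_fiberMass_zero_eq_iff,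
    exists_sum_eq_half_iff_of_card_le_three hcard hsum]

/-- Remark 2: `P_X ↦ I(X;[Y]_M)` is not concave for the noiseless channel on three
symbols: both endpoint distributions achieve `I(X;[Y]_2) = 1`, yet every strict mixture
achieves strictly less than `1`. -/
theorem quantMI_not_concave_in_input (α : ℝ) (hα0 : 0 < α) (hα1 : α < 1) :
    let joint : (Fin 3 → ℝ) → Fin 3 → Fin 3 → ℝ :=
      fun q x y => if x = y then q x else 0
    quantMI (joint ![1/2, 1/4, 1/4]) 2 = 1 ∧
    quantMI (joint ![1/4, 1/4, 1/2]) 2 = 1 ∧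
    quantMI (joint ![(1 + α)/4, 1/4, (2 - α)/4]) 2 < 1 := by
  intro joint
  have sum_vec (a b c : ℝ) : ∑ x, ![a, b, c] x = a + b + c := Fin.sum_univ_three _
  have quantMI_eq_one_iff {q : Fin 3 → ℝ} (hsum : ∑ x, q x = 1) :
      quantMI (joint q) 2 = 1 ↔ ∃ x, q x = 2⁻¹ :=
    quantMI_detJoint_id_two_eq_one_iff_of_card_le_three (Fintype.card_fin 3).le hsum
  refine ⟨?_, ?_, ?_⟩
  · exact (quantMI_eq_one_iff (by norm_num [sum_vec])).mpr ⟨0, by simp⟩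
  · exact (quantMI_eq_one_iff (by norm_num [sum_vec])).mpr ⟨2, by simp⟩
  · have hsum : ∑ x, ![(1 + α)/4, 1/4, (2 - α)/4] x = 1 := by
      rw [sum_vec]
      ring
    refine (quantMI_detJoint_two_le_one hsum id).lt_of_ne fun h => ?_
    obtain ⟨x, hx⟩ := (quantMI_eq_one_iff hsum).mp h
    match x with
    | 0 => linarith [show (1 + α) / 4 = 2⁻¹ from hx]
    | 1 => linarith [show (1 / 4 : ℝ) = 2⁻¹ from hx]
    | 2 => linarith [show (2 - α) / 4 = 2⁻¹ from hx]
end
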